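/- Let T be a deterministic two-way transducer with n states and no acceptance condition. Then there exists a reversible two-way transducer S with no acceptance condition and at most C·n^{4n+1} states (for some absolute constant C) such that ⟦S⟧ = ⟦T⟧ as partial functions from A^ω to B^ω. -/

import Mathlib

namespace Paper

/-! ## Two-way parity automata and transducers over infinite words.

An infinite word over an alphabet `A` is a function `ℕ → A`.
A configuration `⊢ u p v` with `w = u v` is encoded as a pair `(p, |u|) : Q × ℕ`.
The left end-marker `⊢` is encoded as `(none : Option A)`. -/

/-- A two-way automaton (without acceptance condition): states `Q` partitioned into forward
states (`fwd`) and backward states, an initial forward state, and a transition relation `Δ`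
over `Q × (A ∪ {⊢}) × Q` where transitions on the end-marker `⊢` (encoded `none`) go from
backward to forward states. -/
structure TwoWayAut (A : Type) where
  Q : Type
  finQ : Fintype Q
  fwd : Q → Prop
  init : Q
  init_fwd : fwd init
  Δ : Set (Q × Option A × Q)
  marker : ∀ p q, (p, (none : Option A), q) ∈ Δ → ¬ fwd p ∧ fwd q

attribute [instance] TwoWayAut.finQ

variable {A B : Type}

/-- `StepVia M w c t c'` : from configuration `c`, using transition `t`, the automaton `M`
reaches the successor configuration `c'` on input word `w`. -/
def StepVia (M : TwoWayAut A) (w : ℕ → A) (c : M.Q × ℕ)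
    (t : M.Q × Option A × M.Q) (c' : M.Q × ℕ) : Prop :=
  t ∈ M.Δ ∧ t.1 = c.1 ∧ t.2.2 = c'.1 ∧
    ((M.fwd c.1 ∧ t.2.1 = some (w c.2) ∧
        ((M.fwd c'.1 ∧ c'.2 = c.2 + 1) ∨ (¬ M.fwd c'.1 ∧ c'.2 = c.2))) ∨
     (¬ M.fwd c.1 ∧ 0 < c.2 ∧ t.2.1 = some (w (c.2 - 1)) ∧
        ((M.fwd c'.1 ∧ c'.2 = c.2) ∨ (¬ M.fwd c'.1 ∧ c'.2 = c.2 - 1))) ∨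
     (¬ M.fwd c.1 ∧ c.2 = 0 ∧ t.2.1 = none ∧ c'.2 = 0))

/-- The successor relation on configurations. -/
def Step (M : TwoWayAut A) (w : ℕ → A) (c c' : M.Q × ℕ) : Prop :=
  ∃ t, StepVia M w c t c'

/-- An infinite run of `M` on `w`, given by its configurations and the transitions taken. -/
def IsRun (M : TwoWayAut A) (w : ℕ → A) (cfg : ℕ → M.Q × ℕ)
    (tr : ℕ → M.Q × Option A × M.Q) : Prop :=
  cfg 0 = (M.init, 0) ∧ ∀ i, StepVia M w (cfg i) (tr i) (cfg (i + 1))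

/-- The run reads the whole word: the prefix lengths are unbounded. -/
def ReadsWhole (M : TwoWayAut A) (cfg : ℕ → M.Q × ℕ) : Prop :=
  ∀ n : ℕ, ∃ i, n ≤ (cfg i).2

/-- `t` occurs infinitely often in the sequence `tr`. -/
def InfOften {T : Type} (tr : ℕ → T) (t : T) : Prop :=
  ∀ n, ∃ i, n ≤ i ∧ tr i = t

def Deterministic (M : TwoWayAut A) : Prop :=
  ∀ p a q q', (p, a, q) ∈ M.Δ → (p, a, q') ∈ M.Δ → q = q'

def Codeterministic (M : TwoWayAut A) : Prop :=
  ∀ p p' a q, (p, a, q) ∈ M.Δ → (p', a, q) ∈ M.Δ → p = p'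

def Reversible (M : TwoWayAut A) : Prop :=
  Deterministic M ∧ Codeterministic M

def Oneway (M : TwoWayAut A) : Prop := ∀ q, M.fwd q

/-- A two-way parity automaton: a two-way automaton together with a finite family of
coloring functions (indexed by `CIdx`). -/
structure ParityAut (A : Type) extends TwoWayAut A where
  CIdx : Type
  finC : Fintype CIdx
  color : CIdx → (Q × Option A × Q) → ℕ

attribute [instance] ParityAut.finC

/-- The parity acceptance condition: for every coloring function, the minimal color of the
transitions taken infinitely often is even. -/
def ParityCond (M : ParityAut A) (tr : ℕ → M.Q × Option A × M.Q) : Prop :=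
  ∀ c : M.CIdx, Even (sInf {m : ℕ | ∃ t, InfOften tr t ∧ M.color c t = m})

/-- Acceptance of an infinite word by a two-way parity automaton. -/
def ParityAut.Accepts (M : ParityAut A) (w : ℕ → A) : Prop :=
  ∃ cfg tr, IsRun M.toTwoWayAut w cfg tr ∧ ReadsWhole M.toTwoWayAut cfg ∧ ParityCond M tr

/-- All colors of `M` (on its transitions) belong to `{0, …, ℓ-1}`. -/
def ColorsLt (M : ParityAut A) (ℓ : ℕ) : Prop :=
  ∀ (c : M.CIdx) t, t ∈ M.Δ → M.color c t < ℓ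

/-- `l` is a prefix of the infinite word `x`. -/
def IsPrefixOf {C : Type} (l : List C) (x : ℕ → C) : Prop :=
  ∀ (i : ℕ) (h : i < l.length), l.get ⟨i, h⟩ = x i

/-- Concatenation of the first `n` words of a sequence of finite words. -/
def prefixCat {C : Type} (f : ℕ → List C) : ℕ → List C
  | 0 => []
  | n + 1 => prefixCat f n ++ f n

/-- The concatenation of the sequence of finite words `f` is the infinite word `x`. -/
def FlattenTo {C : Type} (f : ℕ → List C) (x : ℕ → C) : Prop :=
  (∀ n, IsPrefixOf (prefixCat f n) x) ∧ ∀ m, ∃ n, m ≤ (prefixCat f n).length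

/-- A two-way parity transducer: a two-way parity automaton (whose underlying automaton is
required to be deterministic via hypotheses) together with an output function. -/
structure TwoWayTrans (A B : Type) extends ParityAut A where
  out : (Q × Option A × Q) → List B

/-- `T.Realizes w x` : the word `w` is accepted by (the deterministic transducer) `T`,
the produced output is infinite and equals `x`.  This is the graph of the partial function
`⟦T⟧ : A^ω ⇀ B^ω`. -/
def TwoWayTrans.Realizes (T : TwoWayTrans A B) (w : ℕ → A) (x : ℕ → B) : Prop :=
  ∃ cfg tr, IsRun T.toTwoWayAut w cfg tr ∧ ReadsWhole T.toTwoWayAut cfg ∧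
    ParityCond T.toParityAut tr ∧ FlattenTo (fun i => T.out (tr i)) x

/-- A two-way Büchi transducer: accepting transitions `acc` instead of coloring functions. -/
structure BuchiTrans (A B : Type) extends TwoWayAut A where
  acc : Set (Q × Option A × Q)
  out : (Q × Option A × Q) → List B

def BuchiTrans.Realizes (T : BuchiTrans A B) (w : ℕ → A) (x : ℕ → B) : Prop :=
  ∃ cfg tr, IsRun T.toTwoWayAut w cfg tr ∧ ReadsWhole T.toTwoWayAut cfg ∧
    (∀ n, ∃ i, n ≤ i ∧ tr i ∈ T.acc) ∧ FlattenTo (fun i => T.out (tr i)) x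

/-- A two-way transducer with no acceptance condition. -/
structure NoAccTrans (A B : Type) extends TwoWayAut A where
  out : (Q × Option A × Q) → List B

def NoAccTrans.Realizes (T : NoAccTrans A B) (w : ℕ → A) (x : ℕ → B) : Prop :=
  ∃ cfg tr, IsRun T.toTwoWayAut w cfg tr ∧ ReadsWhole T.toTwoWayAut cfg ∧
    FlattenTo (fun i => T.out (tr i)) x

/-! ## One-way parity automata, transducers, and copyless parity streaming string
transducers.  A one-way automaton has only forward states and never reads the end-marker,
so we use a simplified (equivalent) presentation. -/

structure OnewayAut (A : Type) where
  Q : Type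
  finQ : Fintype Q
  init : Q
  Δ : Set (Q × A × Q)
  CIdx : Type
  finC : Fintype CIdx
  color : CIdx → (Q × A × Q) → ℕ

attribute [instance] OnewayAut.finQ
attribute [instance] OnewayAut.finC

def OnewayDet (M : OnewayAut A) : Prop :=
  ∀ p a q q', (p, a, q) ∈ M.Δ → (p, a, q') ∈ M.Δ → q = q'

def OnewayRun (M : OnewayAut A) (w : ℕ → A) (s : ℕ → M.Q) : Prop :=
  s 0 = M.init ∧ ∀ i, (s i, w i, s (i + 1)) ∈ M.Δ

def OnewayParityCond (M : OnewayAut A) (tr : ℕ → M.Q × A × M.Q) : Prop :=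
  ∀ c : M.CIdx, Even (sInf {m : ℕ | ∃ t, InfOften tr t ∧ M.color c t = m})

def OnewayAut.Accepts (M : OnewayAut A) (w : ℕ → A) : Prop :=
  ∃ s, OnewayRun M w s ∧ OnewayParityCond M (fun i => (s i, w i, s (i + 1)))

def OnewayColorsLt (M : OnewayAut A) (ℓ : ℕ) : Prop :=
  ∀ (c : M.CIdx) t, t ∈ M.Δ → M.color c t < ℓ

/-- A one-way (deterministic) parity transducer. -/
structure OnewayTrans (A B : Type) extends OnewayAut A where
  out : (Q × A × Q) → List B

def OnewayTrans.Realizes (T : OnewayTrans A B) (w : ℕ → A) (x : ℕ → B) : Prop :=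
  ∃ s, OnewayRun T.toOnewayAut w s ∧
    OnewayParityCond T.toOnewayAut (fun i => (s i, w i, s (i + 1))) ∧
    FlattenTo (fun i => T.out (s i, w i, s (i + 1))) x

/-- Number of occurrences of `a` in the list `l` (classically). -/
noncomputable def occ {C : Type} (a : C) (l : List C) : ℕ :=
  l.countP fun x => @decide (x = a) (Classical.propDecidable _)

/-- A substitution `σ : R → (R ⊎ B)*` is copyless if every register occurs at most once in
the concatenation of all the `σ r'`. -/
def Copyless {R C : Type} [Fintype R] (σ : R → List (R ⊕ C)) : Prop :=
  ∀ r : R, (∑ r' : R, occ (Sum.inl r) (σ r')) ≤ 1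

/-- Applying an assignment `ν : R → B*` (extended to a morphism `(R ⊎ B)* → B*`). -/
def subApply {R C : Type} (ν : R → List C) : List (R ⊕ C) → List C
  | [] => []
  | Sum.inl r :: l => ν r ++ subApply ν l
  | Sum.inr b :: l => b :: subApply ν l

/-- A copyless parity streaming string transducer: a (deterministic) one-way parity
automaton with a finite set `R` of registers, a distinguished output register, and copyless
register updates, where the update of `outReg` always starts with `outReg`. -/
structure CPSST (A B : Type) extends OnewayAut A where
  R : Type
  finR : Fintype R
  outReg : R
  upd : (Q × A × Q) → R → List (R ⊕ B)
  copyless : ∀ t, @Copyless R B finR (upd t)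
  out_form : ∀ t, ∃ γ, upd t outReg = Sum.inl outReg :: γ

attribute [instance] CPSST.finR

/-- The register contents along a run: `ν_0 r = ε` and `ν_{i+1} = ν_i ∘ λ(t_i)`. -/
def regVal (T : CPSST A B) (w : ℕ → A) (s : ℕ → T.Q) : ℕ → T.R → List B
  | 0 => fun _ => []
  | i + 1 => fun r => subApply (regVal T w s i) (T.upd (s i, w i, s (i + 1)) r)

/-- `T.Realizes w x` : the (deterministic) CPSST `T` has an accepting run on `w` whose
output-register contents are unbounded with limit `x`. -/
def CPSST.Realizes (T : CPSST A B) (w : ℕ → A) (x : ℕ → B) : Prop :=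
  ∃ s, OnewayRun T.toOnewayAut w s ∧
    OnewayParityCond T.toOnewayAut (fun i => (s i, w i, s (i + 1))) ∧
    (∀ i, IsPrefixOf (regVal T w s i T.outReg) x) ∧
    (∀ m, ∃ i, m ≤ (regVal T w s i T.outReg).length)

/-- The one-way parity transducer with the same underlying automaton as the CPSST `T`,
which outputs on each transition the (copyless) substitution that `T` applies. -/
def enrich (T : CPSST A B) :
    OnewayTrans A {σ : T.R → List (T.R ⊕ B) // Copyless σ} where
  toOnewayAut := T.toOnewayAut
  out := fun t => [⟨T.upd t, T.copyless t⟩]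

/-! ## Merging forests -/

/-- A merging forest on `(Q⁺ ⊎ Q⁻, χ, ℓ)`: a finite rooted forest (given by a `parent` map
with no cycles) whose leaves (childless nodes) are injectively labeled in `Q⁻` and carry a
`χ`-tuple of integers `< ℓ`, whose roots are injectively labeled in `Q⁺`, and in which every
unary node (exactly one child) is a root. -/
structure MForest (Qp Qm χ : Type) (ℓ : ℕ) where
  V : Type
  finV : Fintype V
  parent : V → Option V
  acyc : ∀ v : V, ¬ Relation.TransGen (fun a b => parent a = some b) v v
  leafLab : V → Qm
  rootLab : V → Qp
  tup : V → χ → ℕ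
  tup_lt : ∀ v, (∀ u, parent u ≠ some v) → ∀ c, tup v c < ℓ
  leaf_inj : ∀ u v, (∀ u', parent u' ≠ some u) → (∀ v', parent v' ≠ some v) →
    leafLab u = leafLab v → u = v
  root_inj : ∀ u v, parent u = none → parent v = none → rootLab u = rootLab v → u = v
  unary_root : ∀ v : V, (∃! u, parent u = some v) → parent v = none

attribute [instance] MForest.finV

/-- Isomorphism of merging forests: a bijection of the nodes commuting with `parent` and
preserving the leaf labels, the leaf tuples and the root labels. -/
def MFIso {Qp Qm χ : Type} {ℓ : ℕ} (F G : MForest Qp Qm χ ℓ) : Prop :=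
  ∃ e : F.V ≃ G.V,
    (∀ v, G.parent (e v) = Option.map e (F.parent v)) ∧
    (∀ v, (∀ u, F.parent u ≠ some v) →
      F.leafLab v = G.leafLab (e v) ∧ ∀ c, F.tup v c = G.tup (e v) c) ∧
    (∀ v, F.parent v = none → F.rootLab v = G.rootLab (e v))

end Paper

/-!
A deterministic one-way automaton simulates `T` by remembering, for the prefix read so far, the
state in which `T` first leaves it, together with a compressed forest recording how the possible
later excursions into the prefix start, merge and end. The edges of the forest carry the outputs
of `T` as registers, and each register is used at most once when the forest is extended by a
letter. There are few enough forests for the bound on the number of states.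

Because of this copylessness, a reversible two-way machine can evaluate the registers: it moves
left to expand a register into its parts, and on its way back the unique place where the register
is used tells it how to continue.

The one-way automaton itself is made reversible by two tokens walking around the tree formed by
the states whose runs merge with the actual run. Time reversal is a symmetry of this walk, so it
could only get stuck where it started; hence it proceeds forever. Composing the two reversible
machines gives the theorem.
-/

namespace Paper

variable {A B : Type}

section Words

variable {C : Type}

theorem prefixCat_prefix (f : ℕ → List C) {k l : ℕ} (h : k ≤ l) :
    prefixCat f k <+: prefixCat f l := by
  induction h with
  | refl => exact List.prefix_rfl
  | step _ ih => exact ih.trans (List.prefix_append _ _)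

theorem IsPrefixOf.of_prefix {l l' : List C} {x : ℕ → C} (h' : IsPrefixOf l' x)
    (h : l <+: l') : IsPrefixOf l x := by
  intro i hi
  rw [← h' i (hi.trans_le h.length_le)]
  exact h.getElem hi

theorem flattenTo_iff_of_subsequence {f u : ℕ → List C} {n : ℕ → ℕ} (hn : ∀ i, i ≤ n i)
    (h : ∀ i, prefixCat f (n i) = prefixCat u i) (x : ℕ → C) :
    FlattenTo f x ↔ FlattenTo u x := by
  have hle (i : ℕ) : prefixCat f i <+: prefixCat u i := h i ▸ prefixCat_prefix f (hn i)
  constructor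
  · rintro ⟨hpre, hlen⟩
    refine ⟨fun i => h i ▸ hpre (n i), fun m => ?_⟩
    obtain ⟨k, hk⟩ := hlen m
    exact ⟨k, hk.trans (hle k).length_le⟩
  · rintro ⟨hpre, hlen⟩
    refine ⟨fun i => (hpre i).of_prefix (hle i), fun m => ?_⟩
    obtain ⟨k, hk⟩ := hlen m
    exact ⟨n k, by rwa [h]⟩

end Words

section Positions

/-- The position from which a state `p` reads the `i`-th letter: a forward state stands to the
left of the letter, a backward state to its right. -/
noncomputable def TwoWayAut.entryPos (M : TwoWayAut A) (p : M.Q) (i : ℕ) : ℕ :=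
  open Classical in if M.fwd p then i else i + 1

/-- The position at which the automaton leaves the `i`-th letter in the state `q`. -/
noncomputable def TwoWayAut.exitPos (M : TwoWayAut A) (q : M.Q) (i : ℕ) : ℕ :=
  open Classical in if M.fwd q then i + 1 else i

variable {M : TwoWayAut A} {p : M.Q}

theorem TwoWayAut.entryPos_of_fwd (h : M.fwd p) (i : ℕ) : M.entryPos p i = i := if_pos h

theorem TwoWayAut.entryPos_of_not_fwd (h : ¬ M.fwd p) (i : ℕ) : M.entryPos p i = i + 1 := if_neg h

theorem TwoWayAut.exitPos_of_fwd (h : M.fwd p) (i : ℕ) : M.exitPos p i = i + 1 := if_pos h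

theorem TwoWayAut.exitPos_of_not_fwd (h : ¬ M.fwd p) (i : ℕ) : M.exitPos p i = i := if_neg h

theorem TwoWayAut.entryPos_injective (p : M.Q) : Function.Injective (M.entryPos p) := by
  intro i j h
  by_cases hp : M.fwd p
  · simpa only [entryPos_of_fwd hp] using h
  · simpa only [entryPos_of_not_fwd hp, Nat.add_right_cancel_iff] using h

theorem TwoWayAut.eq_entryPos_or (p : M.Q) (j : ℕ) :
    (∃ i, j = M.entryPos p i) ∨ ¬ M.fwd p ∧ j = 0 := by
  by_cases hp : M.fwd p
  · exact .inl ⟨j, (entryPos_of_fwd hp j).symm⟩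
  · cases j with
    | zero => exact .inr ⟨hp, rfl⟩
    | succ j => exact .inl ⟨j, (entryPos_of_not_fwd hp j).symm⟩

end Positions

section Steps

variable {M : NoAccTrans A B} {w : ℕ → A} {c c' d d' : M.Q × ℕ} {o o' : List B}

/-- `M.Trans p a o q`: from the state `p`, reading `a` (`none` being the end-marker), `M` may
output `o` and move to the state `q`. -/
def NoAccTrans.Trans (M : NoAccTrans A B) (p : M.Q) (a : Option A) (o : List B) (q : M.Q) : Prop :=
  (p, a, q) ∈ M.Δ ∧ M.out (p, a, q) = o

theorem NoAccTrans.Trans.unique (hM : Deterministic M.toTwoWayAut) {p q q' : M.Q} {a : Option A}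
    (h : M.Trans p a o q) (h' : M.Trans p a o' q') : o = o' ∧ q = q' := by
  obtain rfl := hM _ _ _ _ h.1 h'.1
  exact ⟨h.2.symm.trans h'.2, rfl⟩

/-- One step between configurations, with its output. -/
def OutStep (M : NoAccTrans A B) (w : ℕ → A) (c : M.Q × ℕ) (o : List B) (c' : M.Q × ℕ) : Prop :=
  ∃ t, StepVia M.toTwoWayAut w c t c' ∧ M.out t = o

theorem OutStep.letter {p q : M.Q} {i : ℕ} (h : M.Trans p (some (w i)) o q) :
    OutStep M w (p, M.entryPos p i) o (q, M.exitPos q i) := by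
  refine ⟨_, ⟨h.1, rfl, rfl, ?_⟩, h.2⟩
  by_cases hp : M.fwd p <;> by_cases hq : M.fwd q <;>
    simp [TwoWayAut.entryPos, TwoWayAut.exitPos, hp, hq]

theorem OutStep.marker {p q : M.Q} (h : M.Trans p none o q) :
    OutStep M w (p, 0) o (q, 0) := by
  refine ⟨_, ⟨h.1, rfl, rfl, .inr (.inr ?_)⟩, h.2⟩
  exact ⟨(M.marker _ _ h.1).1, rfl, rfl, rfl⟩

theorem outStep_iff : OutStep M w c o c' ↔
    (∃ i, M.Trans c.1 (some (w i)) o c'.1 ∧ c.2 = M.entryPos c.1 i ∧ c'.2 = M.exitPos c'.1 i) ∨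
      M.Trans c.1 none o c'.1 ∧ c.2 = 0 ∧ c'.2 = 0 := by
  obtain ⟨p, j⟩ := c
  obtain ⟨q, j'⟩ := c'
  constructor
  · rintro ⟨⟨p', a, q'⟩, ⟨ht, hp', hq', h⟩, ho⟩
    dsimp only at hp' hq' h ⊢
    subst hp' hq'
    rcases h with ⟨hp, rfl, h⟩ | ⟨hp, hj, rfl, h⟩ | ⟨-, rfl, rfl, rfl⟩
    · refine .inl ⟨_, ⟨ht, ho⟩, (M.entryPos_of_fwd hp _).symm, ?_⟩
      rcases h with ⟨hq, h⟩ | ⟨hq, h⟩ <;> simpa [TwoWayAut.exitPos, hq] using h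
    · refine .inl ⟨_, ⟨ht, ho⟩, by rw [M.entryPos_of_not_fwd hp]; omega, ?_⟩
      rcases h with ⟨hq, h⟩ | ⟨hq, h⟩
      · rw [M.exitPos_of_fwd hq]; omega
      · rw [M.exitPos_of_not_fwd hq]; omega
    · exact .inr ⟨⟨ht, ho⟩, rfl, rfl⟩
  · dsimp only
    rintro (⟨i, h, rfl, rfl⟩ | ⟨h, rfl, rfl⟩)
    exacts [.letter h, .marker h]

theorem OutStep.unique (hM : Deterministic M.toTwoWayAut)
    (h : OutStep M w c o c') (h' : OutStep M w c o' d') : o = o' ∧ c' = d' := by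
  rcases outStep_iff.1 h with ⟨i, ht, hc, hc'⟩ | ⟨ht, hc, hc'⟩ <;>
    rcases outStep_iff.1 h' with ⟨j, ht', hd, hd'⟩ | ⟨ht', hd, hd'⟩
  · obtain rfl : i = j := M.entryPos_injective _ (hc.symm.trans hd)
    obtain ⟨rfl, hq⟩ := ht.unique hM ht'
    exact ⟨rfl, Prod.ext hq (by rw [hc', hd', hq])⟩
  · rw [hc, M.entryPos_of_not_fwd (M.marker _ _ ht'.1).1] at hd
    omega
  · rw [hd, M.entryPos_of_not_fwd (M.marker _ _ ht.1).1] at hc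
    omega
  · obtain ⟨rfl, hq⟩ := ht.unique hM ht'
    exact ⟨rfl, Prod.ext hq (hc'.trans hd'.symm)⟩

theorem OutStep.trans_of_entryPos {p : M.Q} {i : ℕ}
    (h : OutStep M w (p, M.entryPos p i) o c') :
    M.Trans p (some (w i)) o c'.1 ∧ c'.2 = M.exitPos c'.1 i := by
  rcases outStep_iff.1 h with ⟨j, ht, hij, hc'⟩ | ⟨ht, hi, -⟩
  · obtain rfl := M.entryPos_injective p hij
    exact ⟨ht, hc'⟩
  · have := M.entryPos_of_not_fwd (M.marker _ _ ht.1).1 i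
    dsimp only at hi this
    omega

theorem OutStep.trans_of_zero {p : M.Q} (hp : ¬ M.fwd p) (h : OutStep M w (p, 0) o c') :
    M.Trans p none o c'.1 ∧ c'.2 = 0 := by
  rcases outStep_iff.1 h with ⟨j, -, hj, -⟩ | ⟨ht, -, hc'⟩
  · rw [M.entryPos_of_not_fwd hp] at hj
    dsimp only at hj
    omega
  · exact ⟨ht, hc'⟩

/-- A configuration without successor. -/
def Stuck (M : NoAccTrans A B) (w : ℕ → A) (c : M.Q × ℕ) : Prop :=
  ∀ o c', ¬ OutStep M w c o c'

end Steps

/-- Finite runs, with their lengths and outputs. -/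
inductive Run (M : NoAccTrans A B) (w : ℕ → A) : ℕ → M.Q × ℕ → List B → M.Q × ℕ → Prop
  | nil (c) : Run M w 0 c [] c
  | cons {k c o c' o' c''} : OutStep M w c o c' → Run M w k c' o' c'' →
      Run M w (k + 1) c (o ++ o') c''

section FiniteRuns

variable {M : NoAccTrans A B} {w : ℕ → A} {c c' c'' : M.Q × ℕ} {o o' : List B} {k l : ℕ}

theorem Run.trans (h : Run M w k c o c') (h' : Run M w l c' o' c'') :
    Run M w (k + l) c (o ++ o') c'' := by
  induction h with
  | nil => simpa only [Nat.zero_add, List.nil_append] using h'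
  | cons hs _ ih =>
    rw [List.append_assoc, Nat.add_right_comm]
    exact .cons hs (ih h')

theorem OutStep.run (h : OutStep M w c o c') : Run M w 1 c o c' := by
  simpa only [List.append_nil] using Run.cons h (.nil c')

theorem Run.unique (hM : Deterministic M.toTwoWayAut) (h : Run M w k c o c')
    (h' : Run M w k c o' c'') : o = o' ∧ c' = c'' := by
  induction h generalizing o' with
  | nil => cases h'; exact ⟨rfl, rfl⟩
  | cons hs _ ih =>
    cases h' with
    | cons hs' hr' =>
      obtain ⟨rfl, rfl⟩ := hs.unique hM hs'
      obtain ⟨rfl, rfl⟩ := ih hr'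
      exact ⟨rfl, rfl⟩

theorem Run.split (k : ℕ) (h : Run M w (k + l) c o c'') :
    ∃ o₁ c' o₂, Run M w k c o₁ c' ∧ Run M w l c' o₂ c'' ∧ o = o₁ ++ o₂ := by
  induction k generalizing c o with
  | zero => exact ⟨[], c, o, .nil c, by simpa only [Nat.zero_add] using h, rfl⟩
  | succ k ih =>
    rw [Nat.add_right_comm] at h
    cases h with
    | cons hs hr =>
      obtain ⟨o₁, c', o₂, h₁, h₂, rfl⟩ := ih hr
      exact ⟨_, c', o₂, .cons hs h₁, h₂, (List.append_assoc _ _ _).symm⟩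

end FiniteRuns

section InfiniteRuns

variable {M : NoAccTrans A B} {w : ℕ → A} {cfg : ℕ → M.Q × ℕ} {tr : ℕ → M.Q × Option A × M.Q}

theorem IsRun.run (h : IsRun M.toTwoWayAut w cfg tr) (k : ℕ) :
    Run M w k (M.init, 0) (prefixCat (fun i => M.out (tr i)) k) (cfg k) := by
  induction k with
  | zero => rw [h.1]; exact .nil _
  | succ k ih => exact ih.trans (OutStep.run ⟨tr k, h.2 k, rfl⟩)

theorem exists_isRun (h : ∀ k o c, Run M w k (M.init, 0) o c → ¬ Stuck M w c) :
    ∃ cfg tr, IsRun M.toTwoWayAut w cfg tr := by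
  have hnext (c : M.Q × ℕ) : ∃ t c', ¬ Stuck M w c → StepVia M.toTwoWayAut w c t c' := by
    by_cases hc : Stuck M w c
    · exact ⟨(c.1, none, c.1), c, fun h => absurd hc h⟩
    · simp only [Stuck, not_forall, not_not] at hc
      obtain ⟨-, c', t, ht, -⟩ := hc
      exact ⟨t, c', fun _ => ht⟩
  choose tr next hnext using hnext
  let cfg : ℕ → M.Q × ℕ := fun k => next^[k] (M.init, 0)
  have hsucc (k : ℕ) : cfg (k + 1) = next (cfg k) := Function.iterate_succ_apply' ..
  have hstep (k : ℕ) (o) (hr : Run M w k (M.init, 0) o (cfg k)) :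
      StepVia M.toTwoWayAut w (cfg k) (tr (cfg k)) (cfg (k + 1)) :=
    hsucc k ▸ hnext _ (h _ _ _ hr)
  have hrun (k : ℕ) : ∃ o, Run M w k (M.init, 0) o (cfg k) := by
    induction k with
    | zero => exact ⟨_, .nil _⟩
    | succ k ih =>
      obtain ⟨o, ho⟩ := ih
      exact ⟨_, ho.trans (OutStep.run ⟨_, hstep k o ho, rfl⟩)⟩
  exact ⟨cfg, fun k => tr (cfg k), rfl, fun k => hstep k _ (hrun k).choose_spec⟩

variable (hM : Deterministic M.toTwoWayAut)
include hM

theorem realizes_iff_of_isRun (h : IsRun M.toTwoWayAut w cfg tr) (x : ℕ → B) :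
    M.Realizes w x ↔ ReadsWhole M.toTwoWayAut cfg ∧ FlattenTo (fun i => M.out (tr i)) x := by
  refine ⟨?_, fun ⟨hread, hflat⟩ => ⟨cfg, tr, h, hread, hflat⟩⟩
  rintro ⟨cfg', tr', h', hread, hflat⟩
  have huniq (k : ℕ) := (h'.run k).unique hM (h.run k)
  obtain rfl : cfg' = cfg := funext fun k => (huniq k).2
  exact ⟨hread, (flattenTo_iff_of_subsequence (fun _ => le_rfl) (fun k => (huniq k).1) x).1 hflat⟩

theorem Run.not_realizes_of_stuck {k : ℕ} {o : List B} {c : M.Q × ℕ}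
    (h : Run M w k (M.init, 0) o c) (hc : Stuck M w c) (x : ℕ → B) : ¬ M.Realizes w x := by
  rintro ⟨cfg, tr, hrun, -, -⟩
  obtain ⟨-, rfl⟩ := h.unique hM (hrun.run k)
  exact hc _ _ ⟨tr k, hrun.2 k, rfl⟩

theorem exists_isRun_of_checkpoints {K : ℕ → M.Q × ℕ} {u : ℕ → List B} (h0 : K 0 = (M.init, 0))
    (hK : ∀ i, ∃ k, 1 ≤ k ∧ Run M w k (K i) (u i) (K (i + 1))) :
    ∃ cfg tr n, IsRun M.toTwoWayAut w cfg tr ∧ StrictMono n ∧ (∀ i, cfg (n i) = K i) ∧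
      ∀ i, prefixCat (fun i => M.out (tr i)) (n i) = prefixCat u i := by
  choose len hlen hrun using hK
  let n : ℕ → ℕ := fun i => ∑ j ∈ Finset.range i, len j
  have hsucc (i : ℕ) : n (i + 1) = n i + len i := Finset.sum_range_succ ..
  have hn : StrictMono n := strictMono_nat_of_lt_succ fun i => by have := hlen i; rw [hsucc]; omega
  have hr (i : ℕ) : Run M w (n i) (M.init, 0) (prefixCat u i) (K i) := by
    induction i with
    | zero => rw [h0]; exact .nil _
    | succ i ih => rw [hsucc]; exact ih.trans (hrun i)
  obtain ⟨cfg, tr, h⟩ : ∃ cfg tr, IsRun M.toTwoWayAut w cfg tr := by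
    refine exists_isRun fun k o c hc hstuck => ?_
    obtain ⟨d, hd⟩ := Nat.exists_eq_add_of_lt (hn.id_le (k + 1))
    have := hr (k + 1)
    rw [hd, Nat.add_assoc] at this
    obtain ⟨o₁, c', o₂, h₁, h₂, -⟩ := this.split k
    obtain ⟨-, rfl⟩ := h₁.unique hM hc
    cases h₂ with
    | cons hs _ => exact hstuck _ _ hs
  have huniq (i : ℕ) := (h.run (n i)).unique hM (hr i)
  exact ⟨cfg, tr, n, h, hn, fun i => (huniq i).2, fun i => (huniq i).1⟩

theorem realizes_iff_of_checkpoints {K : ℕ → M.Q × ℕ} {u : ℕ → List B}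
    (h0 : K 0 = (M.init, 0)) (hK : ∀ i, ∃ k, 1 ≤ k ∧ Run M w k (K i) (u i) (K (i + 1)))
    (hpos : ∀ i, i ≤ (K i).2) (x : ℕ → B) : M.Realizes w x ↔ FlattenTo u x := by
  obtain ⟨cfg, tr, n, h, hn, hcfg, hout⟩ := exists_isRun_of_checkpoints hM h0 hK
  rw [realizes_iff_of_isRun hM h, flattenTo_iff_of_subsequence hn.id_le hout]
  exact and_iff_right fun i => ⟨n i, by rw [hcfg]; exact hpos i⟩

theorem IsRun.readsWhole_iff_injective (h : IsRun M.toTwoWayAut w cfg tr) :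
    ReadsWhole M.toTwoWayAut cfg ↔ Function.Injective cfg := by
  constructor
  · intro hread
    by_contra hinj
    obtain ⟨i, j, hij, hlt⟩ : ∃ i j, cfg i = cfg j ∧ i < j := by
      simp only [Function.Injective, not_forall] at hinj
      obtain ⟨i, j, hij, hne⟩ := hinj
      exact (Ne.lt_or_gt hne).elim (fun hlt => ⟨i, j, hij, hlt⟩) (fun hlt => ⟨j, i, hij.symm, hlt⟩)
    have hperiodic (k : ℕ) : cfg (i + k) = cfg (j + k) := by
      induction k with
      | zero => exact hij
      | succ k ih =>
        have hi : OutStep M w (cfg (i + k)) _ (cfg (i + k + 1)) := ⟨_, h.2 (i + k), rfl⟩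
        have hj : OutStep M w (cfg (j + k)) _ (cfg (j + k + 1)) := ⟨_, h.2 (j + k), rfl⟩
        rw [ih] at hi
        exact (hi.unique hM hj).2
    have hback (k : ℕ) : ∃ k' < j, cfg k = cfg k' := by
      induction k using Nat.strong_induction_on with
      | _ k ih =>
        by_cases hk : k < j
        · exact ⟨k, hk, rfl⟩
        · obtain ⟨d, rfl⟩ := Nat.exists_eq_add_of_le (not_lt.1 hk)
          rw [← hperiodic]
          exact ih (i + d) (by omega)
    obtain ⟨k, hk⟩ := hread ((Finset.range j).sup (fun k => (cfg k).2) + 1)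
    obtain ⟨k', hk', heq⟩ := hback k
    have hle := Finset.le_sup (f := fun k => (cfg k).2) (Finset.mem_range.2 hk')
    rw [heq] at hk
    exact Nat.not_succ_le_self _ (hk.trans hle)
  · intro hinj m
    by_contra! hbounded
    have hfin : (Set.univ ×ˢ Set.Iio m : Set (M.Q × ℕ)).Finite :=
      Set.finite_univ.prod (Set.finite_Iio m)
    have hmem (k : ℕ) : cfg k ∈ (Set.univ ×ˢ Set.Iio m : Set (M.Q × ℕ)) := ⟨trivial, hbounded k⟩
    exact Set.infinite_of_injective_forall_mem hinj hmem hfin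

end InfiniteRuns

section Simulation

variable {A' : Type} {M : NoAccTrans A B} {M' : NoAccTrans A' B} {w : ℕ → A} {w' : ℕ → A'}

theorem realizes_iff_of_simulation (hM : Deterministic M.toTwoWayAut)
    (hM' : Deterministic M'.toTwoWayAut) (f : M.Q × ℕ → M'.Q × ℕ)
    (hinit : f (M.init, 0) = (M'.init, 0)) (hpos : ∀ c, (f c).2 = c.2)
    (hstep : ∀ c o c', OutStep M w c o c' → ∃ k, 1 ≤ k ∧ Run M' w' k (f c) o (f c'))
    (hstuck : ∀ c, Stuck M w c → ∃ k o d, Run M' w' k (f c) o d ∧ Stuck M' w' d) (x : ℕ → B) :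
    M.Realizes w x ↔ M'.Realizes w' x := by
  have hlift {k c o c'} (h : Run M w k c o c') : ∃ k', Run M' w' k' (f c) o (f c') := by
    induction h with
    | nil c => exact ⟨0, .nil _⟩
    | cons hs _ ih =>
      obtain ⟨k₁, -, h₁⟩ := hstep _ _ _ hs
      obtain ⟨k₂, h₂⟩ := ih
      exact ⟨_, h₁.trans h₂⟩
  by_cases hrun : ∃ k o c, Run M w k (M.init, 0) o c ∧ Stuck M w c
  · obtain ⟨k, o, c, hr, hc⟩ := hrun
    obtain ⟨k', h'⟩ := hlift hr
    obtain ⟨l, o', d, hd, hd'⟩ := hstuck c hc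
    rw [hinit] at h'
    exact iff_of_false (hr.not_realizes_of_stuck hM hc x)
      ((h'.trans hd).not_realizes_of_stuck hM' hd' x)
  · obtain ⟨cfg, tr, h⟩ : ∃ cfg tr, IsRun M.toTwoWayAut w cfg tr :=
      exists_isRun fun k o c hr hc => hrun ⟨k, o, c, hr, hc⟩
    obtain ⟨cfg', tr', n, h', hn, hcfg, hout⟩ :=
      exists_isRun_of_checkpoints hM' (K := fun i => f (cfg i)) (by rw [h.1, hinit])
        fun i => hstep _ _ _ ⟨tr i, h.2 i, rfl⟩
    rw [realizes_iff_of_isRun hM h, realizes_iff_of_isRun hM' h',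
      flattenTo_iff_of_subsequence hn.id_le hout]
    refine and_congr_left fun _ => ⟨fun hread m => ?_, fun hread => ?_⟩
    · obtain ⟨i, hi⟩ := hread m
      exact ⟨n i, by rwa [hcfg, hpos]⟩
    · rw [h'.readsWhole_iff_injective hM'] at hread
      rw [h.readsWhole_iff_injective hM]
      intro i j hij
      exact hn.injective (hread (by rw [hcfg, hcfg, hij]))

end Simulation

section Excursions

/-- `Crossing T a X k p o s`: starting in the state `p` reading the letter `a`, with `X` describing
the excursions to the left of this letter, `T` leaves the letter to the right in the forward state
`s` after `k` excursions, with output `o`. -/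
inductive Crossing (T : NoAccTrans A B) (a : A) (X : T.Q → List B → T.Q → Prop) :
    ℕ → T.Q → List B → T.Q → Prop
  | exit {p o s} : T.Trans p (some a) o s → T.fwd s → Crossing T a X 0 p o s
  | excursion {p o r o₁ s₁ k o₂ s} : T.Trans p (some a) o r → ¬ T.fwd r → X r o₁ s₁ →
      Crossing T a X k s₁ o₂ s → Crossing T a X (k + 1) p (o ++ (o₁ ++ o₂)) s

/-- `Excursion T w i r o s`: entering the prefix of length `i` of `w` from the right in the backward
state `r`, `T` leaves it again in the forward state `s`, with output `o`. -/
def Excursion (T : NoAccTrans A B) (w : ℕ → A) : ℕ → T.Q → List B → T.Q → Prop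
  | 0 => fun r o s => T.Trans r none o s
  | i + 1 => fun r o s => ∃ k, Crossing T (w i) (Excursion T w i) k r o s

variable {T : NoAccTrans A B} {w : ℕ → A} {a : A} {X : T.Q → List B → T.Q → Prop}
  {i k : ℕ} {p r s s' : T.Q} {o o' : List B}

theorem Crossing.fwd (h : Crossing T a X k p o s) : T.fwd s := by
  induction h with
  | exit _ h => exact h
  | excursion _ _ _ _ ih => exact ih

theorem Excursion.fwd (h : Excursion T w i r o s) : T.fwd s := by
  cases i with
  | zero => exact (T.marker _ _ h.1).2
  | succ i => exact h.choose_spec.fwd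

theorem Crossing.unique (hT : Deterministic T.toTwoWayAut)
    (hX : ∀ r o s o' s', X r o s → X r o' s' → s = s') {k' : ℕ}
    (h : Crossing T a X k p o s) (h' : Crossing T a X k' p o' s') : s = s' := by
  induction h generalizing k' o' with
  | exit h₁ h₂ =>
    cases h' with
    | exit h₁' h₂' => exact (h₁.unique hT h₁').2
    | excursion h₁' h₂' => exact absurd ((h₁.unique hT h₁').2 ▸ h₂) h₂'
  | excursion h₁ h₂ hx _ ih =>
    cases h' with
    | exit h₁' h₂' => exact absurd ((h₁.unique hT h₁').2 ▸ h₂') h₂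
    | excursion h₁' h₂' hx' hw' =>
      obtain ⟨-, rfl⟩ := h₁.unique hT h₁'
      obtain rfl := hX _ _ _ _ _ hx hx'
      exact ih hw'

theorem Excursion.unique (hT : Deterministic T.toTwoWayAut)
    (h : Excursion T w i r o s) (h' : Excursion T w i r o' s') : s = s' := by
  induction i generalizing r o s o' s' with
  | zero => exact (h.unique hT h').2
  | succ i ih =>
    obtain ⟨_, hc⟩ := h
    obtain ⟨_, hc'⟩ := h'
    exact hc.unique (X := Excursion T w i) hT (fun _ _ _ _ _ hx hx' => ih hx hx') hc'

theorem Crossing.exists_run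
    (hX : ∀ r o s, ¬ T.fwd r → Excursion T w i r o s → ∃ k, Run T w k (r, i) o (s, i))
    (h : Crossing T (w i) (Excursion T w i) k p o s) :
    ∃ l, 1 ≤ l ∧ Run T w l (p, T.entryPos p i) o (s, i + 1) := by
  induction h with
  | exit ht hs =>
    have hstep := OutStep.letter ht
    rw [T.exitPos_of_fwd hs] at hstep
    exact ⟨1, le_rfl, hstep.run⟩
  | excursion ht hr hx _ ih =>
    have hstep := OutStep.letter ht
    rw [T.exitPos_of_not_fwd hr] at hstep
    obtain ⟨l₁, hrun₁⟩ := hX _ _ _ hr hx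
    obtain ⟨l₂, -, hrun₂⟩ := ih
    rw [T.entryPos_of_fwd hx.fwd] at hrun₂
    exact ⟨_, Nat.le_add_left _ _, .cons hstep (hrun₁.trans hrun₂)⟩

theorem Excursion.exists_run (hr : ¬ T.fwd r) (h : Excursion T w i r o s) :
    ∃ k, Run T w k (r, i) o (s, i) := by
  induction i generalizing r o s with
  | zero => exact ⟨1, (OutStep.marker h).run⟩
  | succ i ih =>
    obtain ⟨k, h⟩ := h
    obtain ⟨l, -, hrun⟩ := h.exists_run fun _ _ _ => ih
    rw [T.entryPos_of_not_fwd hr] at hrun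
    exact ⟨l, hrun⟩

theorem Run.exists_crossing
    (hE : ∀ k r o c, ¬ T.fwd r → Run T w k (r, i) o c → i < c.2 →
      ∃ k' < k, ∃ o₁ s o₂, Excursion T w i r o₁ s ∧ Run T w k' (s, i) o₂ c)
    {c : T.Q × ℕ} (h : Run T w k (p, T.entryPos p i) o c) (hc : i + 1 < c.2) :
    ∃ k' < k, ∃ m o₁ s o₂, Crossing T (w i) (Excursion T w i) m p o₁ s ∧
      Run T w k' (s, i + 1) o₂ c := by
  induction k using Nat.strong_induction_on generalizing p o with
  | _ k ih =>
    cases h with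
    | nil =>
      simp only [TwoWayAut.entryPos] at hc
      split at hc <;> omega
    | @cons k _ _ c' o' _ hs hrun =>
      obtain ⟨q, j⟩ := c'
      obtain ⟨ht, hj⟩ := hs.trans_of_entryPos
      dsimp only at ht hj
      subst hj
      by_cases hq : T.fwd q
      · rw [T.exitPos_of_fwd hq] at hrun
        exact ⟨k, k.lt_succ_self, 0, _, q, o', .exit ht hq, hrun⟩
      · rw [T.exitPos_of_not_fwd hq] at hrun
        obtain ⟨k₁, hk₁, o₁, s₁, o₂, hx, hrun₁⟩ := hE _ _ _ _ hq hrun (by omega)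
        rw [← T.entryPos_of_fwd hx.fwd i] at hrun₁
        obtain ⟨k₂, hk₂, m, o₃, s, o₄, hcross, hrun₂⟩ := ih _ (by omega) hrun₁
        exact ⟨k₂, by omega, m + 1, _, s, o₄, .excursion ht hq hx hcross, hrun₂⟩

theorem Run.exists_excursion {c : T.Q × ℕ} (hr : ¬ T.fwd r) (h : Run T w k (r, i) o c)
    (hc : i < c.2) :
    ∃ k' < k, ∃ o₁ s o₂, Excursion T w i r o₁ s ∧ Run T w k' (s, i) o₂ c := by
  induction i generalizing k r o c with
  | zero =>
    cases h with
    | nil => exact absurd hc (lt_irrefl _)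
    | @cons k _ _ c' o' _ hs hrun =>
      obtain ⟨q, j⟩ := c'
      obtain ⟨ht, hj⟩ := hs.trans_of_zero hr
      dsimp only at ht hj
      subst hj
      exact ⟨k, k.lt_succ_self, _, q, o', ht, hrun⟩
  | succ i ih =>
    rw [← T.entryPos_of_not_fwd hr i] at h
    obtain ⟨k', hk', m, o₁, s, o₂, hcross, hrun⟩ :=
      h.exists_crossing (fun _ _ _ _ => ih) hc
    exact ⟨k', hk', o₁, s, o₂, ⟨m, hcross⟩, hrun⟩

theorem exists_crossing_of_realizes (hT : Deterministic T.toTwoWayAut) {x : ℕ → B}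
    (h : T.Realizes w x) (hs : T.fwd s) (hrun : Run T w k (T.init, 0) o (s, i)) :
    ∃ m o' s', Crossing T (w i) (Excursion T w i) m s o' s' := by
  obtain ⟨cfg, tr, hcfg, hread, -⟩ := h
  obtain ⟨m, hm⟩ : ∃ m, i + 1 < (cfg (k + m)).2 := by
    obtain ⟨t, ht⟩ := hread ((Finset.range k).sup (fun t => (cfg t).2) + i + 2)
    have hkt : k ≤ t := by
      by_contra! hlt
      have hle := Finset.le_sup (f := fun t => (cfg t).2) (Finset.mem_range.2 hlt)
      omega
    obtain ⟨m, rfl⟩ := Nat.exists_eq_add_of_le hkt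
    exact ⟨m, by omega⟩
  obtain ⟨o₁, c', o₂, h₁, h₂, -⟩ := (hcfg.run (k + m)).split k
  obtain ⟨-, rfl⟩ := hrun.unique hT h₁
  rw [← T.entryPos_of_fwd hs i] at h₂
  obtain ⟨-, -, m, o', s', -, hcross, -⟩ :=
    h₂.exists_crossing (fun _ _ _ _ => Run.exists_excursion) hm
  exact ⟨m, o', s', hcross⟩

end Excursions

/-! ### Compression of functional graphs -/

/-- `Path g x l t`: in the graph `g` on `N` with exits in `X`, the nodes of `l` lead from `x` to the
target `t`, which is a node (not belonging to `l`) or an exit. -/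
inductive Path {N X : Type} (g : N → N ⊕ X → Prop) : N → List N → N ⊕ X → Prop
  | nil (x) : Path g x [] (.inl x)
  | exit {x s} : g x (.inr s) → Path g x [x] (.inr s)
  | cons {x y l t} : g x (.inl y) → Path g y l t → Path g x (x :: l) t

/-- Some path leads from a given node to the exit `s`. -/
inductive LeadsTo {N X : Type} (g : N → N ⊕ X → Prop) (s : X) : N → Prop
  | exit {x} : g x (.inr s) → LeadsTo g s x
  | step {x y} : g x (.inl y) → LeadsTo g s y → LeadsTo g s x

section Paths

variable {N X : Type} {g g' : N → N ⊕ X → Prop} {x y : N} {l l' : List N} {t : N ⊕ X} {s s' : X}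

theorem Path.append : ∀ {x l}, Path g x l (.inl y) → Path g y l' t → Path g x (l ++ l') t
  | _, _, .nil _, h' => h'
  | _, _, .cons h₁ h, h' => .cons h₁ (h.append h')

theorem Path.split (h : Path g x (l ++ y :: l') t) :
    Path g x l (.inl y) ∧ Path g y (y :: l') t := by
  induction l generalizing x with
  | nil =>
    cases h with
    | exit h => exact ⟨.nil _, .exit h⟩
    | cons h h' => exact ⟨.nil _, .cons h h'⟩
  | cons z l ih =>
    cases hl : l ++ y :: l' with
    | nil => simp at hl
    | cons z' l'' =>
      rw [List.cons_append, hl] at h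
      cases h with
      | cons h h' =>
        rw [← hl] at h'
        exact ⟨.cons h (ih h').1, (ih h').2⟩

theorem Path.unique (hg : Relator.RightUnique g) :
    ∀ {x l l'}, Path g x l (.inr s) → Path g x l' (.inr s') → l = l' ∧ s = s'
  | _, _, _, .exit h, .exit h' => ⟨rfl, Sum.inr_injective (hg h h')⟩
  | _, _, _, .exit h, .cons h' _ => nomatch hg h h'
  | _, _, _, .cons h _, .exit h' => nomatch hg h h'
  | _, _, _, .cons h hp, .cons h' hp' => by
    cases hg h h'
    obtain ⟨rfl, rfl⟩ := hp.unique hg hp'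
    exact ⟨rfl, rfl⟩

theorem Path.nodup (hg : Relator.RightUnique g) :
    ∀ {x l}, Path g x l (.inr s) → l.Nodup
  | _, _, .exit _ => List.nodup_singleton _
  | x, _, .cons h hp => by
    refine List.nodup_cons.2 ⟨fun hx => ?_, hp.nodup hg⟩
    obtain ⟨l₁, l₂, rfl⟩ := List.append_of_mem hx
    have hlen := congrArg List.length (((Path.cons h hp).unique hg hp.split.2).1)
    simp only [List.length_cons, List.length_append] at hlen
    omega

theorem Path.exists_eq_cons : Path g x l (.inr s) → ∃ l', l = x :: l'
  | .exit _ => ⟨_, rfl⟩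
  | .cons _ _ => ⟨_, rfl⟩

theorem Path.leadsTo : ∀ {x l}, Path g x l (.inr s) → LeadsTo g s x
  | _, _, .exit h => .exit h
  | _, _, .cons h hp => .step h hp.leadsTo

theorem LeadsTo.exists_path (h : LeadsTo g s x) : ∃ l, Path g x l (.inr s) := by
  induction h with
  | exit h => exact ⟨_, .exit h⟩
  | step h _ ih => exact ih.imp' _ fun _ => .cons h

theorem Path.leadsTo_of_mem (h : Path g x l (.inr s)) (hy : y ∈ l) : LeadsTo g s y := by
  obtain ⟨l₁, l₂, rfl⟩ := List.append_of_mem hy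
  exact h.split.2.leadsTo

theorem LeadsTo.of_subdivision {m : N} (hm : g' x (.inl m)) (hx : ∀ t, g x t → g' m t)
    (hne : ∀ y t, y ≠ x → g y t → g' y t) (h : LeadsTo g s y) : LeadsTo g' s y := by
  induction h with
  | @exit y h =>
    obtain rfl | hy := eq_or_ne y x
    · exact .step hm (.exit (hx _ h))
    · exact .exit (hne _ _ hy h)
  | @step y z h _ ih =>
    obtain rfl | hy := eq_or_ne y x
    · exact .step hm (.step (hx _ h) ih)
    · exact .step (hne _ _ hy h) ih

theorem LeadsTo.unique (hg : Relator.RightUnique g) (h : LeadsTo g s x) (h' : LeadsTo g s' x) :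
    s = s' := by
  obtain ⟨_, hp⟩ := h.exists_path
  obtain ⟨_, hp'⟩ := h'.exists_path
  exact (hp.unique hg hp').2

end Paths

/-- The node or exit that a forest edge with target `t` leads to. The edges of a forest with leaves
in `L` are identified with their sources, the leaf `(ℓ, false)` or the inner node `(ℓ, true)`. -/
def edgeTarget {L X : Type} : L ⊕ X → (L × Bool) ⊕ X :=
  Sum.map (fun ℓ => (ℓ, true)) id

/-- The graph of the forest in which `φ` gives the targets of the edges; edges without target are
absent. -/
def forestGraph {L X : Type} (φ : L × Bool → Option (L ⊕ X)) (e : L × Bool)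
    (t : (L × Bool) ⊕ X) : Prop :=
  ∃ t', φ e = some t' ∧ t = edgeTarget t'

/-- The forest `φ` represents a part of the graph `g`, namely the union of some paths from the nodes
`ι ℓ` to the exits satisfying `keep`: the edge `e` stands for the path `σ e` starting in `st e`. -/
structure IsCompression {N X L : Type} (g : N → N ⊕ X → Prop) (ι : L → N) (keep : X → Prop)
    (φ : L × Bool → Option (L ⊕ X)) (σ : L × Bool → List N) (st : L × Bool → N) : Prop where
  start : ∀ ℓ, st (ℓ, false) = ι ℓ
  path : ∀ {e t}, φ e = some t → Path g (st e) (σ e) (Sum.map st id (edgeTarget t))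
  empty : ∀ {e}, φ e = none → σ e = []
  leads : ∀ {e}, φ e ≠ none → ∃ s, keep s ∧ LeadsTo (forestGraph φ) s e
  disjoint : ∀ {e e' y}, y ∈ σ e → y ∈ σ e' → e = e'

section Compression

variable {N X L : Type} {g : N → N ⊕ X → Prop} {ι : L → N} {keep : X → Prop}
  {φ φ' : L × Bool → Option (L ⊕ X)} {σ : L × Bool → List N} {st : L × Bool → N}
  {e : L × Bool} {ℓ : L} {t : L ⊕ X} {s : X}

theorem LeadsTo.forestGraph_ne_none (h : LeadsTo (forestGraph φ) s e) : φ e ≠ none := by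
  rcases h with ⟨_, h, -⟩ | ⟨⟨_, h, -⟩, -⟩ <;> simp [h]

theorem LeadsTo.forestGraph_mono (h : LeadsTo (forestGraph φ) s e)
    (hφ : ∀ e, φ e ≠ none → φ' e = φ e) : LeadsTo (forestGraph φ') s e := by
  have hmono {e t} : forestGraph φ e t → forestGraph φ' e t := by
    rintro ⟨t', ht, rfl⟩
    exact ⟨t', by rw [hφ e (by simp [ht]), ht], rfl⟩
  induction h with
  | exit h => exact .exit (hmono h)
  | step h _ ih => exact .step (hmono h) ih

/-- Splits the edge `e` of a forest at a new inner node `(ℓ, true)`: the value `a` goes to the part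
of `e` below this node, the value `b` to the part above it. -/
noncomputable def splitEdge {C : Type} (f : L × Bool → C) (e : L × Bool) (ℓ : L) (a b : C) :
    L × Bool → C :=
  open Classical in fun e' => if e' = e then a else if e' = (ℓ, true) then b else f e'

section SplitEdge

variable {C : Type} {f : L × Bool → C} {e' : L × Bool} {a b : C}

theorem splitEdge_self : splitEdge f e ℓ a b e = a := if_pos rfl

theorem splitEdge_inner (hne : e ≠ (ℓ, true)) : splitEdge f e ℓ a b (ℓ, true) = b :=
  (if_neg hne.symm).trans (if_pos rfl)

theorem splitEdge_of_ne (h : e' ≠ e) (h' : e' ≠ (ℓ, true)) : splitEdge f e ℓ a b e' = f e' :=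
  (if_neg h).trans (if_neg h')

theorem splitEdge_of_ne_inner (h' : e' ≠ (ℓ, true)) : splitEdge f e ℓ (f e) b e' = f e' := by
  obtain rfl | h := eq_or_ne e' e
  · exact splitEdge_self
  · exact splitEdge_of_ne h h'

theorem LeadsTo.forestGraph_splitEdge (hℓ : φ (ℓ, true) = none) (he : φ e = some t)
    (h : LeadsTo (forestGraph φ) s e') :
    LeadsTo (forestGraph (splitEdge φ e ℓ (some (.inl ℓ)) (some t))) s e' := by
  have hne : e ≠ (ℓ, true) := by rintro rfl; simp [hℓ] at he
  refine h.of_subdivision (x := e) ⟨_, splitEdge_self, rfl⟩ ?_ ?_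
  · rintro _ ⟨t', ht', rfl⟩
    exact ⟨t', by rw [splitEdge_inner hne, ← he, ht'], rfl⟩
  · rintro e' _ h ⟨t', ht', rfl⟩
    refine ⟨t', (splitEdge_of_ne h ?_).trans ht', rfl⟩
    rintro rfl
    simp [hℓ] at ht'

theorem exists_mem_of_mem_splitEdge {e e' : L × Bool} {ℓ : L} {σ : L × Bool → List N}
    {u v : List N} {z : N} (hσ : σ e = u ++ v) (hz : z ∈ splitEdge σ e ℓ u v e') :
    ∃ e, z ∈ σ e := by
  obtain rfl | h := eq_or_ne e' e
  · rw [splitEdge_self] at hz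
    exact ⟨e', by rw [hσ]; exact List.mem_append_left _ hz⟩
  · obtain rfl | h' := eq_or_ne e' (ℓ, true)
    · rw [splitEdge_inner h.symm] at hz
      exact ⟨e, by rw [hσ]; exact List.mem_append_right _ hz⟩
    · rw [splitEdge_of_ne h h'] at hz
      exact ⟨e', hz⟩

theorem disjoint_splitEdge (hne : e ≠ (ℓ, true)) {u v : List N}
    (hσ : ∀ {e e' y}, y ∈ σ e → y ∈ σ e' → e = e') (he : σ e = u ++ v) (hnodup : (u ++ v).Nodup)
    {e₁ e₂ : L × Bool} {y : N} (h₁ : y ∈ splitEdge σ e ℓ u v e₁)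
    (h₂ : y ∈ splitEdge σ e ℓ u v e₂) : e₁ = e₂ := by
  have hcases {e'} (h : y ∈ splitEdge σ e ℓ u v e') :
      e' = e ∧ y ∈ u ∨ e' = (ℓ, true) ∧ y ∈ v ∨ e' ≠ e ∧ y ∈ σ e' := by
    obtain rfl | hee' := eq_or_ne e' e
    · exact .inl ⟨rfl, by rwa [splitEdge_self] at h⟩
    · obtain rfl | he' := eq_or_ne e' (ℓ, true)
      · exact .inr (.inl ⟨rfl, by rwa [splitEdge_inner hne] at h⟩)
      · exact .inr (.inr ⟨hee', by rwa [splitEdge_of_ne hee' he'] at h⟩)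
  have hdisj := List.disjoint_of_nodup_append hnodup
  have hmem {e'} (h : y ∈ σ e') (h' : y ∈ u ∨ y ∈ v) : e' = e :=
    hσ h (he ▸ List.mem_append.2 h')
  rcases hcases h₁ with ⟨rfl, hu⟩ | ⟨rfl, hv⟩ | ⟨hne₁, h⟩ <;>
    rcases hcases h₂ with ⟨rfl, hu'⟩ | ⟨rfl, hv'⟩ | ⟨hne₂, h'⟩
  · rfl
  · exact (hdisj hu hv').elim
  · exact absurd (hmem h' (.inl hu)) hne₂
  · exact (hdisj hu' hv).elim
  · rfl
  · exact absurd (hmem h' (.inr hv)) hne₂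
  · exact absurd (hmem h (.inl hu')) hne₁
  · exact absurd (hmem h (.inr hv')) hne₁
  · exact hσ h h'

end SplitEdge

namespace IsCompression

theorem target_ne_none (H : IsCompression g ι keep φ σ st) (h : φ e = some (.inl ℓ)) :
    φ (ℓ, true) ≠ none := by
  obtain ⟨s, -, hs⟩ := H.leads (e := e) (by simp [h])
  rcases hs with ⟨_, ht, hs⟩ | ⟨⟨_, ht, hs⟩, hl⟩ <;> rw [h] at ht <;> cases ht <;> cases hs
  exact hl.forestGraph_ne_none

theorem path_flatMap (H : IsCompression g ι keep φ σ st) :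
    ∀ {e l}, Path (forestGraph φ) e l (.inr s) → Path g (st e) (l.flatMap σ) (.inr s)
  | e, _, .exit ⟨t, ht, hs⟩ => by
    have := H.path ht
    rw [← hs] at this
    rw [List.flatMap_singleton]
    exact this
  | e, _, .cons (y := e') ⟨t, ht, hs⟩ h => by
    have := H.path ht
    rw [← hs] at this
    exact this.append (H.path_flatMap h)

theorem leadsTo (H : IsCompression g ι keep φ σ st) (h : LeadsTo (forestGraph φ) s e) :
    LeadsTo g s (st e) :=
  (H.path_flatMap h.exists_path.choose_spec).leadsTo

theorem exists_path_append (H : IsCompression g ι keep φ σ st) (he : φ e ≠ none) :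
    ∃ l s, keep s ∧ Path g (st e) (σ e ++ l) (.inr s) := by
  obtain ⟨s, hs, hl⟩ := H.leads he
  obtain ⟨l, hl⟩ := hl.exists_path
  obtain ⟨l', rfl⟩ := hl.exists_eq_cons
  exact ⟨_, s, hs, H.path_flatMap hl⟩

theorem ne_none_of_mem (H : IsCompression g ι keep φ σ st) {y : N} (hy : y ∈ σ e) : φ e ≠ none := by
  intro he
  rw [H.empty he] at hy
  exact List.not_mem_nil hy

theorem leadsTo_of_mem (H : IsCompression g ι keep φ σ st) {y : N} (hy : y ∈ σ e) :
    ∃ s, keep s ∧ LeadsTo g s y := by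
  obtain ⟨l, s, hs, hl⟩ := H.exists_path_append (H.ne_none_of_mem hy)
  exact ⟨s, hs, hl.leadsTo_of_mem (List.mem_append_left _ hy)⟩

theorem nodup (H : IsCompression g ι keep φ σ st) (hg : Relator.RightUnique g) (e : L × Bool) :
    (σ e).Nodup := by
  by_cases he : φ e = none
  · rw [H.empty he]
    exact List.nodup_nil
  · obtain ⟨l, s, -, hl⟩ := H.exists_path_append he
    exact (hl.nodup hg).of_append_left

open Classical in
theorem leads_attach (H : IsCompression g ι keep φ σ st) (hℓ : φ (ℓ, false) = none)
    (ht : Sum.elim (fun m => φ (m, true) ≠ none) keep t)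
    (he : Function.update φ (ℓ, false) (some t) e ≠ none) :
    ∃ s, keep s ∧ LeadsTo (forestGraph (Function.update φ (ℓ, false) (some t))) s e := by
  have hmono {e s} (h : LeadsTo (forestGraph φ) s e) :
      LeadsTo (forestGraph (Function.update φ (ℓ, false) (some t))) s e := by
    refine h.forestGraph_mono fun e he => Function.update_of_ne ?_ _ _
    rintro rfl
    exact he hℓ
  obtain rfl | hne := eq_or_ne e (ℓ, false)
  · have hedge : forestGraph (Function.update φ (ℓ, false) (some t)) (ℓ, false) (edgeTarget t) :=
      ⟨t, Function.update_self .., rfl⟩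
    rcases t with m | s
    · obtain ⟨s, hs, hlead⟩ := H.leads ht
      exact ⟨s, hs, .step hedge (hmono hlead)⟩
    · exact ⟨s, ht, .exit hedge⟩
  · rw [Function.update_of_ne hne] at he
    obtain ⟨s, hs, hlead⟩ := H.leads he
    exact ⟨s, hs, hmono hlead⟩

open Classical in
theorem attach (H : IsCompression g ι keep φ σ st) (hℓ : φ (ℓ, false) = none) {l : List N}
    (hl : Path g (ι ℓ) l (Sum.map st id (edgeTarget t))) (hnew : ∀ y ∈ l, ∀ e, y ∉ σ e)
    (ht : Sum.elim (fun m => φ (m, true) ≠ none) keep t) :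
    IsCompression g ι keep (Function.update φ (ℓ, false) (some t))
      (Function.update σ (ℓ, false) l) st := by
  refine ⟨H.start, fun {e t'} he => ?_, fun {e} he => ?_, fun {e} he => H.leads_attach hℓ ht he,
    fun {e e' y} hy hy' => ?_⟩
  · obtain rfl | hne := eq_or_ne e (ℓ, false)
    · rw [Function.update_self] at he ⊢
      cases he
      rwa [H.start]
    · rw [Function.update_of_ne hne] at he ⊢
      exact H.path he
  · obtain rfl | hne := eq_or_ne e (ℓ, false)
    · simp at he
    · rw [Function.update_of_ne hne] at he ⊢
      exact H.empty he
  · obtain rfl | hne := eq_or_ne e (ℓ, false) <;> obtain rfl | hne' := eq_or_ne e' (ℓ, false)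
    · rfl
    · rw [Function.update_self] at hy
      rw [Function.update_of_ne hne'] at hy'
      exact absurd hy' (hnew y hy e')
    · rw [Function.update_self] at hy'
      rw [Function.update_of_ne hne] at hy
      exact absurd hy (hnew y hy' e)
    · rw [Function.update_of_ne hne] at hy
      rw [Function.update_of_ne hne'] at hy'
      exact H.disjoint hy hy'

theorem leads_splitEdge (H : IsCompression g ι keep φ σ st) (hℓ : φ (ℓ, true) = none)
    (he : φ e = some t) {e' : L × Bool} (he' : splitEdge φ e ℓ (some (.inl ℓ)) (some t) e' ≠ none) :
    ∃ s, keep s ∧ LeadsTo (forestGraph (splitEdge φ e ℓ (some (.inl ℓ)) (some t))) s e' := by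
  by_cases hφ : φ e' = none
  · obtain rfl : e' = (ℓ, true) := by
      by_contra h'
      refine he' ((splitEdge_of_ne ?_ h').trans hφ)
      rintro rfl
      simp [he] at hφ
    obtain ⟨s, hs, hlead⟩ := H.leads (e := e) (by simp [he])
    refine ⟨s, hs, ?_⟩
    rcases hlead.forestGraph_splitEdge hℓ he with ⟨_, ht, h⟩ | ⟨⟨_, ht, h⟩, hl⟩ <;>
      rw [splitEdge_self] at ht <;> cases ht <;> cases h
    exact hl
  · obtain ⟨s, hs, hlead⟩ := H.leads hφ
    exact ⟨s, hs, hlead.forestGraph_splitEdge hℓ he⟩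

theorem subdivide (H : IsCompression g ι keep φ σ st) (hg : Relator.RightUnique g)
    (hℓ : φ (ℓ, true) = none) (he : φ e = some t) {u v : List N} {y : N}
    (hσ : σ e = u ++ y :: v) :
    IsCompression g ι keep (splitEdge φ e ℓ (some (.inl ℓ)) (some t))
      (splitEdge σ e ℓ u (y :: v)) (splitEdge st e ℓ (st e) y) := by
  have hne : e ≠ (ℓ, true) := by rintro rfl; simp [hℓ] at he
  have htarget {e' t'} (h : φ e' = some t') :
      Sum.map (splitEdge st e ℓ (st e) y) id (edgeTarget t') = Sum.map st id (edgeTarget t') := by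
    rcases t' with m | s
    · refine congrArg Sum.inl (splitEdge_of_ne_inner ?_)
      rintro ⟨⟩
      exact H.target_ne_none h hℓ
    · rfl
  have hpath := H.path he
  rw [hσ] at hpath
  refine ⟨fun m => ?_, fun {e' t'} he' => ?_, fun {e'} he' => ?_, fun {e'} he' => ?_,
    disjoint_splitEdge hne H.disjoint hσ (hσ ▸ H.nodup hg e)⟩
  · rw [splitEdge_of_ne_inner (by simp), H.start]
  · obtain rfl | h := eq_or_ne e' e
    · rw [splitEdge_self] at he' ⊢
      cases he'
      rw [splitEdge_self]
      simpa [edgeTarget, splitEdge_inner hne] using hpath.split.1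
    · obtain rfl | h' := eq_or_ne e' (ℓ, true)
      · rw [splitEdge_inner hne] at he' ⊢
        cases he'
        rw [splitEdge_inner hne, htarget he]
        exact hpath.split.2
      · rw [splitEdge_of_ne h h'] at he' ⊢
        rw [splitEdge_of_ne h h', htarget he']
        exact H.path he'
  · obtain rfl | h := eq_or_ne e' e
    · simp [splitEdge_self] at he'
    · obtain rfl | h' := eq_or_ne e' (ℓ, true)
      · simp [splitEdge_inner hne] at he'
      · rw [splitEdge_of_ne h h'] at he' ⊢
        exact H.empty he'
  · exact H.leads_splitEdge hℓ he he'

-- The path starting in `ι ℓ` becomes a new edge up to the first node on an edge `e`, where `e` is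
-- split.
theorem exists_insert_leaf (H : IsCompression g ι keep φ σ st) (hg : Relator.RightUnique g)
    (hℓ : ∀ b, φ (ℓ, b) = none) (hs : keep s) (h : LeadsTo g s (ι ℓ)) :
    ∃ φ' σ' st', IsCompression g ι keep φ' σ' st' ∧ φ' (ℓ, false) ≠ none ∧
      ∀ m ≠ ℓ, ∀ b, φ' (m, b) = none ↔ φ (m, b) = none := by
  classical
  obtain ⟨l, hl⟩ := h.exists_path
  cases hfind : l.find? (fun y => ∃ e, y ∈ σ e) with
  | none =>
    have hnew : ∀ y ∈ l, ∀ e, y ∉ σ e := by simpa using hfind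
    refine ⟨_, _, _, H.attach (t := .inr s) (hℓ false) hl hnew hs, by simp, fun m hm b => ?_⟩
    rw [Function.update_of_ne (by simp [hm])]
  | some y =>
    obtain ⟨hy, l₁, l₂, rfl, hnew⟩ := List.find?_eq_some_iff_append.1 hfind
    simp only [decide_eq_true_eq, Bool.not_eq_true', decide_eq_false_iff_not, not_exists] at hy hnew
    obtain ⟨e, hy⟩ := hy
    obtain ⟨t, he⟩ := Option.ne_none_iff_exists'.1 (H.ne_none_of_mem hy)
    obtain ⟨u, v, hσ⟩ := List.append_of_mem hy
    have hne (b : Bool) : (ℓ, b) ≠ e := by rintro rfl; simp [hℓ] at he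
    have H' := H.subdivide hg (hℓ true) he hσ
    refine ⟨_, _, _, H'.attach (ℓ := ℓ) (t := .inl ℓ) (l := l₁) ?_ ?_ ?_ ?_, by simp, ?_⟩
    · rw [splitEdge_of_ne (hne _) (by simp), hℓ]
    · simpa [edgeTarget, splitEdge_inner (hne true).symm] using hl.split.1
    · exact fun z hz e' hz' => (exists_mem_of_mem_splitEdge hσ hz').elim (hnew z hz)
    · simp [splitEdge_inner (hne true).symm]
    · intro m hm b
      rw [Function.update_of_ne (by simp [hm])]
      by_cases h : (m, b) = e
      · rw [h, splitEdge_self]; simp [he]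
      · rw [splitEdge_of_ne h (by simp [hm])]

variable (g) in
theorem exists_forall_ne_none [Finite L] (hg : Relator.RightUnique g) (ι : L → N)
    (keep : X → Prop) :
    ∃ φ σ st, IsCompression g ι keep φ σ st ∧
      ∀ ℓ s, keep s → LeadsTo g s (ι ℓ) → φ (ℓ, false) ≠ none := by
  classical
  have := Fintype.ofFinite L
  suffices h : ∀ ls : Finset L, ∃ φ σ st, IsCompression g ι keep φ σ st ∧
      (∀ ℓ ∉ ls, ∀ b, φ (ℓ, b) = none) ∧
      ∀ ℓ ∈ ls, ∀ s, keep s → LeadsTo g s (ι ℓ) → φ (ℓ, false) ≠ none by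
    obtain ⟨φ, σ, st, H, -, h⟩ := h Finset.univ
    exact ⟨φ, σ, st, H, fun ℓ => h ℓ (Finset.mem_univ ℓ)⟩
  intro ls
  induction ls using Finset.induction_on with
  | empty =>
    refine ⟨fun _ => none, fun _ => [], fun e => ι e.1, ⟨?_, ?_, ?_, ?_, ?_⟩, ?_, ?_⟩ <;> simp
  | insert ℓ ls hℓ ih =>
    obtain ⟨φ, σ, st, H, hout, hin⟩ := ih
    by_cases h : ∃ s, keep s ∧ LeadsTo g s (ι ℓ)
    · obtain ⟨s, hs, h⟩ := h
      obtain ⟨φ', σ', st', H', hnew, hold⟩ := H.exists_insert_leaf hg (hout ℓ hℓ) hs h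
      refine ⟨φ', σ', st', H', fun m hm b => ?_, fun m hm s hs hl => ?_⟩
      · rw [Finset.mem_insert, not_or] at hm
        exact (hold m hm.1 b).2 (hout m hm.2 b)
      · obtain rfl | hne := eq_or_ne m ℓ
        · exact hnew
        · rw [Ne, hold m hne]
          exact hin m (Finset.mem_of_mem_insert_of_ne hm hne) s hs hl
    · refine ⟨φ, σ, st, H, fun m hm => hout m fun hm' => hm (Finset.mem_insert_of_mem hm'),
        fun m hm s hs hl => ?_⟩
      obtain rfl | hm := Finset.mem_insert.1 hm
      · exact absurd ⟨s, hs, hl⟩ h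
      · exact hin m hm s hs hl

end IsCompression

variable (g) in
theorem exists_compression [Finite L] (hg : Relator.RightUnique g) (ι : L → N) (keep : X → Prop) :
    ∃ (φ : L × Bool → Option (L ⊕ X)) (σ : L × Bool → List N),
      (∀ e, (σ e).Nodup) ∧
      (∀ e e' y, y ∈ σ e → y ∈ σ e' → e = e') ∧
      (∀ e, ∀ y ∈ σ e, ∃ s, keep s ∧ LeadsTo g s y) ∧
      (∀ ℓ s, keep s → LeadsTo g s (ι ℓ) → LeadsTo (forestGraph φ) s (ℓ, false)) ∧
      ∀ ℓ l s, Path (forestGraph φ) (ℓ, false) l (.inr s) →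
        Path g (ι ℓ) (l.flatMap σ) (.inr s) := by
  obtain ⟨φ, σ, st, H, h⟩ := IsCompression.exists_forall_ne_none g hg ι keep
  refine ⟨φ, σ, H.nodup hg, fun _ _ _ => H.disjoint, fun _ _ => H.leadsTo_of_mem,
    fun ℓ s hs hl => ?_, fun ℓ l s hl => H.start ℓ ▸ H.path_flatMap hl⟩
  obtain ⟨s', -, hl'⟩ := H.leads (h ℓ s hs hl)
  rwa [hl.unique hg (H.start ℓ ▸ H.leadsTo hl')]

end Compression

/-! ### The deterministic one-way automaton of forests -/

/-- The backward states of `T`. -/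
abbrev NoAccTrans.Bwd (T : NoAccTrans A B) := {q : T.Q // ¬ T.fwd q}

/-- The forward states of `T`. -/
abbrev NoAccTrans.Fwd (T : NoAccTrans A B) := {q : T.Q // T.fwd q}

/-- The edges of the forests describing the excursions of `T`, whose leaves are backward states and
whose roots are forward states. -/
abbrev NoAccTrans.Edge (T : NoAccTrans A B) := T.Bwd × Bool

/-- What the one-way automaton remembers of a prefix of the input: the state in which `T` first
leaves this prefix, and the forest of the excursions of `T` into it, up to those leaving it in that
state. -/
abbrev ForestState (T : NoAccTrans A B) := T.Fwd × (T.Edge → Option (T.Bwd ⊕ T.Fwd))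

/-- The excursions into a prefix followed by the letter `a`, the excursions into the prefix being
given by the forest `φ`. A node is an edge of `φ` or a state of `T` reading the letter `a`. -/
inductive LetterGraph (T : NoAccTrans A B) (φ : T.Edge → Option (T.Bwd ⊕ T.Fwd)) (a : A) :
    T.Edge ⊕ T.Q → (T.Edge ⊕ T.Q) ⊕ T.Fwd → Prop
  | edge {e m} : φ e = some (.inl m) → LetterGraph T φ a (.inl e) (.inl (.inl (m, true)))
  | root {e s} : φ e = some (.inr s) → LetterGraph T φ a (.inl e) (.inl (.inr s.1))
  | back {p o} {r : T.Bwd} : T.Trans p (some a) o r.1 →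
      LetterGraph T φ a (.inr p) (.inl (.inl (r, false)))
  | exit {p o} {s : T.Fwd} : T.Trans p (some a) o s.1 → LetterGraph T φ a (.inr p) (.inr s)

/-- `IsUpdate T d a d' σ`: reading `a` in the state `d`, the one-way automaton may move to `d'`. The
list `σ none` is the path of the main run of `T`, and `σ (some e)` is the path compressed into the
edge `e` of the new forest. -/
structure IsUpdate (T : NoAccTrans A B) (d : ForestState T) (a : A) (d' : ForestState T)
    (σ : Option T.Edge → List (T.Edge ⊕ T.Q)) : Prop where
  main : Path (LetterGraph T d.2 a) (.inr d.1.1) (σ none) (.inr d'.1)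
  leadsTo : ∀ r s, s ≠ d'.1 → LeadsTo (LetterGraph T d.2 a) s (.inr r.1) →
    LeadsTo (forestGraph d'.2) s (r, false)
  path : ∀ r l s, Path (forestGraph d'.2) (r, false) l (.inr s) →
    Path (LetterGraph T d.2 a) (.inr r.1) (l.flatMap fun e => σ (some e)) (.inr s)
  nodup : ∀ e, (σ e).Nodup
  disjoint : ∀ e e' y, y ∈ σ e → y ∈ σ e' → e = e'

open Classical in
/-- The output of `T` when reading the letter `a` in the state `p`. -/
noncomputable def letterOut (T : NoAccTrans A B) (a : A) (p : T.Q) : List B :=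
  if h : ∃ o q, T.Trans p (some a) o q then h.choose else []

/-- The state `d` and the contents `ν e` of a register for each edge `e` of its forest describe the
excursions of `T` into the prefix of length `i` of `w`. -/
structure Represents (T : NoAccTrans A B) (w : ℕ → A) (i : ℕ) (d : ForestState T)
    (ν : T.Edge → List B) : Prop where
  sound : ∀ {r l s}, Path (forestGraph d.2) (r, false) l (.inr s) →
    Excursion T w i r.1 (l.flatMap ν) s.1
  complete : ∀ {r : T.Bwd} {o} {s : T.Fwd}, Excursion T w i r.1 o s.1 → s ≠ d.1 →
    LeadsTo (forestGraph d.2) s (r, false)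

section Forest

variable {T : NoAccTrans A B} {w : ℕ → A} {i k : ℕ} {a : A} {d d' : ForestState T}
  {φ : T.Edge → Option (T.Bwd ⊕ T.Fwd)} {σ : Option T.Edge → List (T.Edge ⊕ T.Q)}
  {ν : T.Edge → List B} {p q : T.Q} {s : T.Fwd} {o : List B}

theorem NoAccTrans.Trans.letterOut_eq (hT : Deterministic T.toTwoWayAut)
    (h : T.Trans p (some a) o q) : letterOut T a p = o := by
  have h' : ∃ o q, T.Trans p (some a) o q := ⟨o, q, h⟩
  rw [letterOut, dif_pos h']
  exact (h'.choose_spec.choose_spec.unique hT h).1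

theorem letterGraph_rightUnique (hT : Deterministic T.toTwoWayAut) (φ) (a : A) :
    Relator.RightUnique (LetterGraph T φ a) := by
  intro x t t' h h'
  cases h with
  | edge h => cases h' with | edge h' | root h' => simp_all
  | root h => cases h' with | edge h' | root h' => simp_all
  | @back p o r h =>
    cases h' with
    | back h' => rw [Subtype.ext (h.unique hT h').2]
    | @exit _ _ s h' => exact absurd ((h.unique hT h').2 ▸ s.2) r.2
  | @exit p o s h =>
    cases h' with
    | @back _ _ r h' => exact absurd ((h.unique hT h').2 ▸ s.2) r.2
    | exit h' => rw [Subtype.ext (h.unique hT h').2]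

theorem exists_isUpdate (hT : Deterministic T.toTwoWayAut)
    (h : LeadsTo (LetterGraph T d.2 a) s (.inr d.1.1)) : ∃ d' σ, IsUpdate T d a d' σ := by
  have hg := letterGraph_rightUnique hT d.2 a
  obtain ⟨l, hl⟩ := h.exists_path
  obtain ⟨φ, σ, hnodup, hdisj, hkeep, hleads, hpath⟩ :=
    exists_compression (LetterGraph T d.2 a) hg (fun r : T.Bwd => .inr r.1) (· ≠ s)
  have hmain {e y} (hy : y ∈ l) (hy' : y ∈ σ e) : False := by
    obtain ⟨s', hs', hl'⟩ := hkeep e y hy'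
    exact hs' (hl'.unique hg (hl.leadsTo_of_mem hy))
  refine ⟨(s, φ), fun e => e.elim l σ, hl, hleads, hpath, ?_, ?_⟩
  · rintro (_ | e)
    exacts [hl.nodup hg, hnodup e]
  · rintro (_ | e) (_ | e') y hy hy'
    · rfl
    · exact (hmain hy hy').elim
    · exact (hmain hy' hy).elim
    · exact congrArg some (hdisj e e' y hy hy')

theorem LeadsTo.letterGraph {e : T.Edge} {s' : T.Fwd} (h : LeadsTo (forestGraph φ) s e)
    (h' : LeadsTo (LetterGraph T φ a) s' (.inr s.1)) :
    LeadsTo (LetterGraph T φ a) s' (.inl e) := by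
  induction h with
  | exit h =>
    obtain ⟨m | s, h, ht⟩ := h <;> cases ht
    exact .step (.root h) h'
  | step h _ ih =>
    obtain ⟨m | s, h, ht⟩ := h <;> cases ht
    exact .step (.edge h) ih

mutual

theorem Represents.exists_crossing (hT : Deterministic T.toTwoWayAut) (H : Represents T w i d ν) :
    ∀ {p l}, Path (LetterGraph T d.2 (w i)) (.inr p) l (.inr s) →
      ∃ k, Crossing T (w i) (Excursion T w i) k p
        (l.flatMap (Sum.elim ν (letterOut T (w i)))) s.1
  | _, _, .exit (.exit ht) =>
    ⟨0, by simpa [ht.letterOut_eq hT] using Crossing.exit ht s.2⟩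
  | _, _, .cons (.back (r := r) ht) h => by
    obtain ⟨l, s', k, o, hl, hk, ho⟩ := H.exists_crossing_of_edge hT h
    exact ⟨k + 1, by simpa [ht.letterOut_eq hT, ho] using Crossing.excursion ht r.2 (H.sound hl) hk⟩

theorem Represents.exists_crossing_of_edge (hT : Deterministic T.toTwoWayAut)
    (H : Represents T w i d ν) :
    ∀ {e l}, Path (LetterGraph T d.2 (w i)) (.inl e) l (.inr s) →
      ∃ l' s' k o, Path (forestGraph d.2) e l' (.inr s') ∧
        Crossing T (w i) (Excursion T w i) k s'.1 o s.1 ∧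
        l.flatMap (Sum.elim ν (letterOut T (w i))) = l'.flatMap ν ++ o
  | e, _, .cons (.edge he) h => by
    obtain ⟨l, s', k, o, hl, hk, ho⟩ := H.exists_crossing_of_edge hT h
    exact ⟨e :: l, s', k, o, .cons ⟨_, he, rfl⟩ hl, hk, by simp [ho]⟩
  | e, _, .cons (.root he) h => by
    obtain ⟨k, hk⟩ := H.exists_crossing hT h
    exact ⟨[e], _, k, _, .exit ⟨_, he, rfl⟩, hk, by simp⟩

end

theorem Represents.leadsTo_or_exists_crossing (H : Represents T w i d ν)
    (h : Crossing T (w i) (Excursion T w i) k p o s.1) :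
    LeadsTo (LetterGraph T d.2 (w i)) s (.inr p) ∨
      ∃ k' < k, ∃ o', Crossing T (w i) (Excursion T w i) k' d.1.1 o' s.1 := by
  generalize hq : s.1 = q at h
  induction h with
  | @exit _ _ _ ht _ =>
    subst hq
    exact .inl (.exit (.exit ht))
  | @excursion p o r o₁ s₁ k o₂ _ ht hr hx hc ih =>
    by_cases hs : s₁ = d.1.1
    · subst hs
      exact .inr ⟨k, k.lt_succ_self, o₂, hc⟩
    · have hleads := H.complete (r := ⟨r, hr⟩) (s := ⟨s₁, hx.fwd⟩) hx (by simpa [Subtype.ext_iff])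
      obtain h | ⟨k', hk', h⟩ := ih hq
      · exact .inl (.step (.back (r := ⟨r, hr⟩) ht) (hleads.letterGraph h))
      · exact .inr ⟨k', by omega, h⟩

theorem Represents.exists_isUpdate_of_crossing (hT : Deterministic T.toTwoWayAut)
    (H : Represents T w i d ν) (h : Crossing T (w i) (Excursion T w i) k d.1.1 o q) :
    ∃ d' σ, IsUpdate T d (w i) d' σ := by
  induction k using Nat.strong_induction_on generalizing o with
  | _ k ih =>
    obtain h | ⟨k', hk', o', h⟩ := H.leadsTo_or_exists_crossing (s := ⟨q, h.fwd⟩) h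
    · exact exists_isUpdate hT h
    · exact ih k' hk' h

theorem Represents.update (hT : Deterministic T.toTwoWayAut) (H : Represents T w i d ν)
    (hd : IsUpdate T d (w i) d' σ) :
    Represents T w (i + 1) d'
      fun e => (σ (some e)).flatMap (Sum.elim ν (letterOut T (w i))) where
  sound h := by
    rw [← List.flatMap_assoc]
    exact H.exists_crossing hT (hd.path _ _ _ h)
  complete {r o s} h hs := by
    obtain ⟨k, hk⟩ := h
    obtain h | ⟨k', -, o', h⟩ := H.leadsTo_or_exists_crossing hk
    · exact hd.leadsTo r s hs h
    · obtain ⟨k₀, h₀⟩ := H.exists_crossing hT hd.main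
      exact absurd (Subtype.ext (h.unique hT (X := Excursion T w i)
        (fun _ _ _ _ _ hx hx' => hx.unique hT hx') h₀)) hs

variable (T) in
theorem exists_represents_zero (hT : Deterministic T.toTwoWayAut) :
    ∃ φ ν, ∀ w, Represents T w 0 (⟨T.init, T.init_fwd⟩, φ) ν := by
  have h (r : T.Bwd) : ∃ (t : Option T.Fwd) (o : List B),
      ∀ o' s, T.Trans r.1 none o' s ↔ o = o' ∧ ∃ s', t = some s' ∧ s'.1 = s := by
    by_cases hr : ∃ o s, T.Trans r.1 none o s
    · obtain ⟨o, s, h⟩ := hr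
      refine ⟨some ⟨s, (T.marker _ _ h.1).2⟩, o, fun o' s' => ⟨fun h' => ?_, ?_⟩⟩
      · exact ⟨(h.unique hT h').1, _, rfl, (h.unique hT h').2⟩
      · rintro ⟨rfl, _, ⟨⟩, rfl⟩
        exact h
    · exact ⟨none, [], fun o' s => ⟨fun h => (hr ⟨o', s, h⟩).elim, by simp⟩⟩
  choose t o ht using h
  refine ⟨fun e => if e.2 then none else (t e.1).map .inr, fun e => o e.1, fun w => ⟨?_, ?_⟩⟩
  · intro r l s h
    cases h with
    | exit h =>
      obtain ⟨t', h, h'⟩ := h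
      obtain ⟨s', hs', rfl⟩ : ∃ s', t r = some s' ∧ .inr s' = t' := by simpa using h
      cases h'
      exact (ht r _ _).2 ⟨by simp, _, hs', rfl⟩
    | cons h _ =>
      obtain ⟨t', h, h'⟩ := h
      obtain ⟨s', -, rfl⟩ : ∃ s', t r = some s' ∧ .inr s' = t' := by simpa using h
      cases h'
  · intro r o s h _
    obtain ⟨-, s', hs', h⟩ := (ht r o s.1).1 h
    rw [Subtype.ext h] at hs'
    exact .exit ⟨.inr s, by simp [hs'], rfl⟩

end Forest

/-! ### Reversible evaluation of copyless registers -/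

/-- A reversible transducer described by its moves `Move p a o q`, which read `a` and output `o`. -/
structure ReversibleMoves (A B : Type) where
  Q : Type
  finQ : Fintype Q
  fwd : Q → Prop
  init : Q
  init_fwd : fwd init
  Move : Q → Option A → List B → Q → Prop
  marker : ∀ {p o q}, Move p none o q → ¬ fwd p ∧ fwd q
  det : ∀ {p a o q o' q'}, Move p a o q → Move p a o' q' → o = o' ∧ q = q'
  codet : ∀ {p a o q p' o'}, Move p a o q → Move p' a o' q → p = p'

open Classical in
/-- The transducer with the given moves. -/
noncomputable def ReversibleMoves.toTrans (M : ReversibleMoves A B) : NoAccTrans A B where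
  Q := M.Q
  finQ := M.finQ
  fwd := M.fwd
  init := M.init
  init_fwd := M.init_fwd
  Δ := {t | ∃ o, M.Move t.1 t.2.1 o t.2.2}
  marker _ _ := fun ⟨_, h⟩ => M.marker h
  out t := if h : ∃ o, M.Move t.1 t.2.1 o t.2.2 then h.choose else []

theorem ReversibleMoves.trans_iff {M : ReversibleMoves A B} {p q : M.Q} {a : Option A}
    {o : List B} : M.toTrans.Trans p a o q ↔ M.Move p a o q := by
  have hout (h : ∃ o, M.Move p a o q) : M.toTrans.out (p, a, q) = h.choose := dif_pos h
  constructor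
  · rintro ⟨h, rfl⟩
    rw [hout h]
    exact h.choose_spec
  · intro h
    have h' : ∃ o, M.Move p a o q := ⟨o, h⟩
    exact ⟨h', (hout h').trans (M.det h'.choose_spec h).1⟩

theorem ReversibleMoves.reversible (M : ReversibleMoves A B) :
    Reversible M.toTrans.toTwoWayAut :=
  ⟨fun _ _ _ _ ⟨_, h⟩ ⟨_, h'⟩ => (M.det h h').2, fun _ _ _ _ ⟨_, h⟩ ⟨_, h'⟩ => M.codet h h'⟩

/-- A machine with copyless registers. Reading the letter `a`, it replaces the contents of each
register `r` by the value of `row a (some r)`, and outputs the value of `row a none`, provided that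
`a` satisfies `guard`. -/
structure RegisterMachine (A B : Type) where
  Reg : Type
  finReg : Fintype Reg
  init : Reg → List B
  row : A → Option Reg → List (Reg ⊕ List B)
  guard : A → Prop
  nodup : ∀ a e, ((row a e).filterMap Sum.getLeft?).Nodup
  disjoint : ∀ {a e e' r}, .inl r ∈ row a e → .inl r ∈ row a e' → e = e'

/-- The control states of the evaluation of the registers of a machine: `none` evaluates the output,
while `some (r, false)` calls the evaluation of the register `r`, which returns in the state
`some (r, true)`. -/
abbrev Control (R : Type) := Option (R × Bool)

/-- The control state in which the evaluation of a register, or of the output, starts. -/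
abbrev Control.start {R : Type} (x : Option R) : Control R := x.map (·, false)

/-- The control state in which the evaluation of a register, or of the output, ends. -/
abbrev Control.finish {R : Type} (x : Option R) : Control R := x.map (·, true)

/-- The moves `(source, output, target)` evaluating a row, where `fin` is the final state, `src` the
current state, and the list of letters is the output since the last return from a register. -/
def blocks {R : Type} (fin : Control R) :
    Control R → List B → List (R ⊕ List B) → List (Control R × List B × Control R)
  | src, o, [] => [(src, o, fin)]
  | src, o, .inl r :: l => (src, o, some (r, false)) :: blocks fin (some (r, true)) [] l
  | src, o, .inr u :: l => blocks fin src (o ++ u) l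

section Blocks

variable {R : Type} {fin src : Control R} {o : List B} {l : List (R ⊕ List B)}

variable (fin src o l) in
theorem map_source_blocks : (blocks fin src o l).map (·.1) =
    src :: (l.filterMap Sum.getLeft?).map fun r => some (r, true) := by
  fun_induction blocks fin src o l <;> simp_all [List.filterMap_cons]

variable (fin src o l) in
theorem map_target_blocks : (blocks fin src o l).map (·.2.2) =
    (l.filterMap Sum.getLeft?).map (fun r => some (r, false)) ++ [fin] := by
  fun_induction blocks fin src o l <;> simp_all [List.filterMap_cons]

theorem eq_or_exists_of_source_mem_blocks {b} (h : b ∈ blocks fin src o l) :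
    b.1 = src ∨ ∃ r, b.1 = some (r, true) ∧ .inl r ∈ l := by
  have h := List.mem_map_of_mem (f := (·.1)) h
  simpa [map_source_blocks, and_comm, eq_comm (a := b.1)] using h

theorem eq_or_exists_of_target_mem_blocks {b} (h : b ∈ blocks fin src o l) :
    b.2.2 = fin ∨ ∃ r, b.2.2 = some (r, false) ∧ .inl r ∈ l := by
  have h := List.mem_map_of_mem (f := (·.2.2)) h
  simpa [map_target_blocks, and_comm, or_comm, eq_comm (a := b.2.2)] using h

theorem exists_run_blocks {M : NoAccTrans A B} {v : ℕ → A} {i : ℕ} {ν : R → List B}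
    (f : Control R → M.Q) (hfin : M.fwd (f fin)) (hcall : ∀ r, ¬ M.fwd (f (some (r, false))))
    (hret : ∀ r, M.fwd (f (some (r, true))))
    (hν : ∀ r, ∃ k, Run M v k (f (some (r, false)), i) (ν r) (f (some (r, true)), i))
    (h : ∀ b ∈ blocks fin src o l, M.Trans (f b.1) (some (v i)) b.2.1 (f b.2.2)) :
    ∃ k, 1 ≤ k ∧ Run M v k (f src, M.entryPos (f src) i) (o ++ l.flatMap (Sum.elim ν id))
      (f fin, i + 1) := by
  fun_induction blocks fin src o l with
  | case1 src o =>
    have hstep := OutStep.letter (h _ (List.mem_singleton_self _))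
    rw [M.exitPos_of_fwd hfin] at hstep
    exact ⟨1, le_rfl, by simpa using hstep.run⟩
  | case2 src o r l ih =>
    have hstep := OutStep.letter (h _ List.mem_cons_self)
    obtain ⟨k, hk⟩ := hν r
    obtain ⟨k', -, hk'⟩ := ih fun b hb => h b (List.mem_cons_of_mem _ hb)
    rw [M.exitPos_of_not_fwd (hcall r)] at hstep
    rw [M.entryPos_of_fwd (hret r)] at hk'
    exact ⟨_, Nat.le_add_left _ _, by simpa using Run.cons hstep (hk.trans hk')⟩
  | case3 src o u l ih => simpa using ih h

end Blocks

namespace RegisterMachine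

/-- `M.Move a q o q'`: the evaluation of `M` may move from `q` to `q'`, outputting `o`, when reading
`a`, or the end-marker for the initial contents of a register. -/
inductive Move (M : RegisterMachine A B) :
    Control M.Reg → Option A → List B → Control M.Reg → Prop
  | init (r) : Move M (some (r, false)) none (M.init r) (some (r, true))
  | row {a x q o q'} (hguard : x = none → M.guard a)
      (hb : (q, o, q') ∈ blocks (.finish x) (.start x) [] (M.row a x)) : Move M q (some a) o q'

variable (M : RegisterMachine A B) {a : A} {x y : Option M.Reg}

theorem source_blocks_injective {b b'}
    (h : b ∈ blocks (.finish x) (.start x) [] (M.row a x))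
    (h' : b' ∈ blocks (.finish y) (.start y) [] (M.row a y)) (hb : b.1 = b'.1) :
    b = b' := by
  obtain rfl : x = y := by
    obtain hx | ⟨r, hx, hr⟩ := eq_or_exists_of_source_mem_blocks h <;>
      obtain hy | ⟨r', hy, hr'⟩ := eq_or_exists_of_source_mem_blocks h'
    · exact Option.map_injective (Prod.mk_left_injective false) (hx.symm.trans (hb.trans hy))
    · cases x <;> simp_all
    · cases y <;> simp_all
    · obtain rfl : r = r' := by simpa [hx, hy] using hb
      exact M.disjoint hr hr'
  refine List.inj_on_of_nodup_map (f := (·.1)) ?_ h h' hb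
  rw [map_source_blocks, List.nodup_cons]
  exact ⟨by cases x <;> simp, (M.nodup a x).map fun r r' hr => by simpa using hr⟩

theorem target_blocks_injective {b b'}
    (h : b ∈ blocks (.finish x) (.start x) [] (M.row a x))
    (h' : b' ∈ blocks (.finish y) (.start y) [] (M.row a y))
    (hb : b.2.2 = b'.2.2) : b = b' := by
  obtain rfl : x = y := by
    obtain hx | ⟨r, hx, hr⟩ := eq_or_exists_of_target_mem_blocks h <;>
      obtain hy | ⟨r', hy, hr'⟩ := eq_or_exists_of_target_mem_blocks h'
    · exact Option.map_injective (Prod.mk_left_injective true) (hx.symm.trans (hb.trans hy))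
    · cases x <;> simp_all
    · cases y <;> simp_all
    · obtain rfl : r = r' := by simpa [hx, hy] using hb
      exact M.disjoint hr hr'
  refine List.inj_on_of_nodup_map (f := (·.2.2)) ?_ h h' hb
  rw [map_target_blocks, List.nodup_append_comm, List.singleton_append, List.nodup_cons]
  exact ⟨by cases x <;> simp, (M.nodup a x).map fun r r' hr => by simpa using hr⟩

/-- The reversible transducer evaluating the output of `M`, which recursively evaluates the contents
of the registers in this output. -/
noncomputable def evaluator : NoAccTrans A B :=
  ReversibleMoves.toTrans
    { Q := Control M.Reg
      finQ := have := M.finReg; Fintype.ofFinite _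
      fwd := fun q => ∀ r, q ≠ some (r, false)
      init := none
      init_fwd := by simp
      Move := M.Move
      marker := by rintro _ _ _ ⟨⟩; simp
      det := by
        rintro _ _ _ _ _ _ (⟨r⟩ | ⟨-, h⟩) h'
        · cases h'
          exact ⟨rfl, rfl⟩
        · cases h' with | row _ h' => ?_
          simpa using M.source_blocks_injective h h' rfl
      codet := by
        rintro _ _ _ _ _ _ (⟨r⟩ | ⟨-, h⟩) h'
        · cases h'
          rfl
        · cases h' with | row _ h' => ?_
          exact congrArg Prod.fst (M.target_blocks_injective h h' rfl) }

theorem reversible_evaluator : Reversible M.evaluator.toTwoWayAut :=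
  ReversibleMoves.reversible _

theorem trans_evaluator_iff {p q : M.evaluator.Q} {a : Option A} {o : List B} :
    M.evaluator.Trans p a o q ↔ M.Move p a o q :=
  ReversibleMoves.trans_iff

/-- The state of the evaluator in which the evaluation of a register, or of the output, starts. -/
def start (x : Option M.Reg) : M.evaluator.Q := Control.start x

/-- The state of the evaluator in which the evaluation of a register, or of the output, ends. -/
def finish (x : Option M.Reg) : M.evaluator.Q := Control.finish x

theorem not_fwd_start (r : M.Reg) : ¬ M.evaluator.fwd (M.start (some r)) := fun h => h r rfl

theorem fwd_finish : M.evaluator.fwd (M.finish x) := by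
  cases x <;> exact fun _ h => nomatch h

/-- The contents of the registers of `M` after reading `i` letters of `v`. -/
def content (v : ℕ → A) : ℕ → M.Reg → List B
  | 0 => M.init
  | i + 1 => fun r => (M.row (v i) (some r)).flatMap (Sum.elim (content v i) id)

/-- The output of `M` when reading the `i`-th letter of `v`. -/
def output (v : ℕ → A) (i : ℕ) : List B :=
  (M.row (v i) none).flatMap (Sum.elim (M.content v i) id)

variable {M} {v : ℕ → A} {i : ℕ}

theorem exists_run_row (hx : x = none → M.guard (v i))
    (hν : ∀ r, ∃ k, Run M.evaluator v k (M.start (some r), i) (M.content v i r)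
      (M.finish (some r), i)) :
    ∃ k, 1 ≤ k ∧ Run M.evaluator v k (M.start x, M.evaluator.entryPos (M.start x) i)
      ((M.row (v i) x).flatMap (Sum.elim (M.content v i) id)) (M.finish x, i + 1) :=
  exists_run_blocks (M := M.evaluator) (o := []) id M.fwd_finish M.not_fwd_start
    (fun r => M.fwd_finish (x := some r)) hν fun _ hb => M.trans_evaluator_iff.2 (.row hx hb)

variable (M v i) in
theorem exists_run_content (r : M.Reg) : ∃ k, Run M.evaluator v k (M.start (some r), i)
    (M.content v i r) (M.finish (some r), i) := by
  induction i generalizing r with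
  | zero => exact ⟨1, (OutStep.marker (M.trans_evaluator_iff.2 (.init r))).run⟩
  | succ i ih =>
    obtain ⟨k, -, h⟩ := exists_run_row (x := some r) (by simp) ih
    rw [TwoWayAut.entryPos_of_not_fwd (M.not_fwd_start r)] at h
    exact ⟨k, h⟩

theorem exists_run_output (h : M.guard (v i)) :
    ∃ k, 1 ≤ k ∧ Run M.evaluator v k (M.evaluator.init, i) (M.output v i)
      (M.evaluator.init, i + 1) := by
  obtain ⟨k, hk, hrun⟩ := exists_run_row (x := none) (fun _ => h) (M.exists_run_content v i)
  rw [TwoWayAut.entryPos_of_fwd (show M.evaluator.fwd (M.start none) from M.evaluator.init_fwd)]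
    at hrun
  exact ⟨k, hk, hrun⟩

theorem stuck_of_not_guard (h : ¬ M.guard (v i)) : Stuck M.evaluator v (M.evaluator.init, i) := by
  intro o c hc
  rw [← M.evaluator.entryPos_of_fwd M.evaluator.init_fwd i] at hc
  cases M.trans_evaluator_iff.1 hc.trans_of_entryPos.1 with | row hguard hb => ?_
  obtain hx | ⟨r, hr, -⟩ := eq_or_exists_of_source_mem_blocks hb
  · exact h (hguard (Option.map_eq_none_iff.1 hx.symm))
  · exact Option.some_ne_none _ hr.symm

theorem exists_run_init (h : ∀ j < i, M.guard (v j)) :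
    ∃ k o, Run M.evaluator v k (M.evaluator.init, 0) o (M.evaluator.init, i) := by
  induction i with
  | zero => exact ⟨0, [], .nil _⟩
  | succ i ih =>
    obtain ⟨k, o, hrun⟩ := ih fun j hj => h j (hj.trans i.lt_succ_self)
    obtain ⟨k', -, hrun'⟩ := exists_run_output (h i i.lt_succ_self)
    exact ⟨_, _, hrun.trans hrun'⟩

theorem realizes_evaluator_iff (hguard : ∀ i, M.guard (v i)) (x : ℕ → B) :
    M.evaluator.Realizes v x ↔ FlattenTo (M.output v) x :=
  realizes_iff_of_checkpoints (K := fun i => (M.evaluator.init, i)) M.reversible_evaluator.1 rfl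
    (fun i => exists_run_output (hguard i)) (fun _ => le_rfl) x

theorem not_realizes_evaluator (h : ∀ j < i, M.guard (v j)) (hi : ¬ M.guard (v i)) (x : ℕ → B) :
    ¬ M.evaluator.Realizes v x := by
  obtain ⟨k, o, hrun⟩ := exists_run_init h
  exact hrun.not_realizes_of_stuck M.reversible_evaluator.1 (stuck_of_not_guard hi) x

end RegisterMachine

section ForestMachine

variable {T : NoAccTrans A B} {w : ℕ → A} {i : ℕ} {a : A} {d : ForestState T}

/-- The one-way automaton can read `a` in the state `d`. -/
def IsUpdatable (T : NoAccTrans A B) (d : ForestState T) (a : A) : Prop :=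
  ∃ d' σ, IsUpdate T d a d' σ

open Classical in
/-- A successor of the state `d` of the one-way automaton on the letter `a`, which is `d` itself
where there is none. -/
noncomputable def nextForest (T : NoAccTrans A B) (d : ForestState T) (a : A) : ForestState T :=
  if h : IsUpdatable T d a then h.choose else d

open Classical in
/-- The paths compressed by the transition of the one-way automaton from the state `d` on the letter
`a`, which are empty where there is none. -/
noncomputable def forestRows (T : NoAccTrans A B) (d : ForestState T) (a : A) :
    Option T.Edge → List (T.Edge ⊕ T.Q) :=
  if h : IsUpdatable T d a then h.choose_spec.choose else fun _ => []

theorem IsUpdatable.isUpdate (h : IsUpdatable T d a) :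
    IsUpdate T d a (nextForest T d a) (forestRows T d a) := by
  rw [nextForest, forestRows, dif_pos h, dif_pos h]
  exact h.choose_spec.choose_spec

theorem nodup_forestRows (d : ForestState T) (a : A) (e) : (forestRows T d a e).Nodup := by
  by_cases h : IsUpdatable T d a
  · exact h.isUpdate.nodup e
  · simp [forestRows, h]

theorem eq_of_mem_forestRows {e e' y} (h : y ∈ forestRows T d a e) (h' : y ∈ forestRows T d a e') :
    e = e' := by
  by_cases hd : IsUpdatable T d a
  · exact hd.isUpdate.disjoint e e' y h h'
  · simp [forestRows, hd] at h

/-- The machine reading the input of `T` annotated by the states of the one-way automaton, whose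
registers contain the outputs of the excursions compressed into the edges of the forest. -/
noncomputable def forestMachine (T : NoAccTrans A B) (hT : Deterministic T.toTwoWayAut) :
    RegisterMachine (ForestState T × A) B where
  Reg := T.Edge
  finReg := Fintype.ofFinite _
  init := (exists_represents_zero T hT).choose_spec.choose
  row x e := (forestRows T x.1 x.2 e).map (Sum.map id (letterOut T x.2))
  guard x := IsUpdatable T x.1 x.2
  nodup x e := by
    have h (l : List (T.Edge ⊕ T.Q)) : (l.map (Sum.map id (letterOut T x.2))).filterMap
        Sum.getLeft? = l.filterMap Sum.getLeft? := by
      rw [List.filterMap_map]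
      exact congrArg (List.filterMap · l) (funext (by rintro (_ | _) <;> rfl))
    rw [h]
    refine (nodup_forestRows x.1 x.2 e).filterMap fun y y' e hy hy' => ?_
    rw [Option.mem_def, Sum.getLeft?_eq_some_iff] at hy hy'
    exact hy.trans hy'.symm
  disjoint {x e e' r} h h' := by
    have hmem {e} (h : .inl r ∈ (forestRows T x.1 x.2 e).map (Sum.map id (letterOut T x.2))) :
        .inl r ∈ forestRows T x.1 x.2 e := by
      obtain ⟨_ | _, hy, ⟨⟩⟩ := List.mem_map.1 h
      exact hy
    exact eq_of_mem_forestRows (hmem h) (hmem h')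

/-- The initial state of the one-way automaton. -/
noncomputable def initForest (T : NoAccTrans A B) (hT : Deterministic T.toTwoWayAut) :
    ForestState T :=
  (⟨T.init, T.init_fwd⟩, (exists_represents_zero T hT).choose)

/-- The state of the one-way automaton after reading `i` letters of `w`. -/
noncomputable def forestSeq (T : NoAccTrans A B) (hT : Deterministic T.toTwoWayAut) (w : ℕ → A) :
    ℕ → ForestState T
  | 0 => initForest T hT
  | i + 1 => nextForest T (forestSeq T hT w i) (w i)

/-- The word `w` annotated by the states of the one-way automaton. -/
noncomputable def annotate (T : NoAccTrans A B) (hT : Deterministic T.toTwoWayAut) (w : ℕ → A)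
    (i : ℕ) : ForestState T × A :=
  (forestSeq T hT w i, w i)

variable (hT : Deterministic T.toTwoWayAut)

theorem flatMap_row_forestMachine (x : ForestState T × A) (e)
    (ν : (forestMachine T hT).Reg → List B) :
    ((forestMachine T hT).row x e).flatMap (Sum.elim ν id) =
      (forestRows T x.1 x.2 e).flatMap (Sum.elim ν (letterOut T x.2)) :=
  (List.flatMap_map _ _ _).trans (List.flatMap_congr fun y _ => by cases y <;> rfl)

theorem isUpdate_forestSeq (h : (forestMachine T hT).guard (annotate T hT w i)) :
    IsUpdate T (forestSeq T hT w i) (w i) (forestSeq T hT w (i + 1))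
      (forestRows T (forestSeq T hT w i) (w i)) :=
  IsUpdatable.isUpdate h

theorem represents_forestSeq (h : ∀ j < i, (forestMachine T hT).guard (annotate T hT w j)) :
    Represents T w i (forestSeq T hT w i) ((forestMachine T hT).content (annotate T hT w) i) := by
  induction i with
  | zero => exact (exists_represents_zero T hT).choose_spec.choose_spec w
  | succ i ih =>
    have hcontent : (forestMachine T hT).content (annotate T hT w) (i + 1) = _ :=
      funext fun e => flatMap_row_forestMachine hT (annotate T hT w i) (some e) _
    rw [hcontent]
    exact (ih fun j hj => h j (hj.trans i.lt_succ_self)).update hT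
      (isUpdate_forestSeq hT (h i i.lt_succ_self))

theorem exists_run_forestSeq (h : ∀ j ≤ i, (forestMachine T hT).guard (annotate T hT w j)) :
    ∃ k, 1 ≤ k ∧ Run T w k ((forestSeq T hT w i).1.1, i)
      ((forestMachine T hT).output (annotate T hT w) i)
      ((forestSeq T hT w (i + 1)).1.1, i + 1) := by
  have H := represents_forestSeq hT fun j hj => h j (le_of_lt hj)
  obtain ⟨k, hk⟩ := H.exists_crossing hT (isUpdate_forestSeq hT (h i le_rfl)).main
  obtain ⟨k, hk, hrun⟩ := hk.exists_run fun r o s hr hx => hx.exists_run hr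
  rw [TwoWayAut.entryPos_of_fwd (forestSeq T hT w i).1.2] at hrun
  refine ⟨k, hk, ?_⟩
  rwa [RegisterMachine.output, flatMap_row_forestMachine]

theorem exists_run_to_forestSeq (h : ∀ j < i, (forestMachine T hT).guard (annotate T hT w j)) :
    ∃ k o, Run T w k (T.init, 0) o ((forestSeq T hT w i).1.1, i) := by
  induction i with
  | zero => exact ⟨0, [], .nil _⟩
  | succ i ih =>
    obtain ⟨k, o, hrun⟩ := ih fun j hj => h j (hj.trans i.lt_succ_self)
    obtain ⟨k', -, hrun'⟩ := exists_run_forestSeq hT fun j hj => h j (Nat.lt_succ_of_le hj)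
    exact ⟨_, _, hrun.trans hrun'⟩

theorem realizes_evaluator_forestMachine_iff (w : ℕ → A) (x : ℕ → B) :
    (forestMachine T hT).evaluator.Realizes (annotate T hT w) x ↔ T.Realizes w x := by
  classical
  by_cases h : ∀ i, (forestMachine T hT).guard (annotate T hT w i)
  · rw [RegisterMachine.realizes_evaluator_iff h, realizes_iff_of_checkpoints
      (K := fun i => ((forestSeq T hT w i).1.1, i)) hT rfl
      (fun i => exists_run_forestSeq hT fun j _ => h j) (fun _ => le_rfl)]
  · have h := not_forall.1 h
    have hlt (j) (hj : j < Nat.find h) : (forestMachine T hT).guard (annotate T hT w j) :=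
      not_not.1 (Nat.find_min h hj)
    refine iff_of_false (RegisterMachine.not_realizes_evaluator hlt (Nat.find_spec h) x) ?_
    intro hx
    obtain ⟨k, o, hrun⟩ := exists_run_to_forestSeq hT hlt
    obtain ⟨m, o', s, hcross⟩ := exists_crossing_of_realizes hT hx (forestSeq T hT w _).1.2 hrun
    exact Nat.find_spec h ((represents_forestSeq hT hlt).exists_isUpdate_of_crossing hT hcross)

end ForestMachine

/-! ### Composition with a reversible walker -/

/-- A two-way walk over words labeled in `A`, with set of states `V`. In each cell, the walk
connects the ports `(false, v)` and `(true, v)` on the left and on the right of the cell, according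
to the label `a` of the cell and to the involution `pass a`. It may turn around on the left of the
first cell according to `mark`. The walk is used to compute a sequence of elements of `P`, the
states `core p` of the walk being those representing the elements of this sequence. -/
structure Walker (A P V : Type) where
  pass : A → Bool × V → Bool × V
  mark : V → Option V
  core : P → V
  start : P
  pass_pass : ∀ a e, pass a (pass a e) = e
  pass_ne : ∀ a e, pass a e ≠ e
  mark_symm : ∀ {v v'}, mark v = some v' → mark v' = some v
  mark_ne : ∀ v, mark v ≠ some v
  core_injective : Function.Injective core
  mark_core_start : mark (core start) = none

namespace Walker

section Steps

variable {P V : Type} (W : Walker A P V) {w : ℕ → A}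

/-- The configuration `(state, direction, position)` in which the walk enters the cell `j` through
the port `e`, the direction being `true` when going to the right. -/
def entering (j : ℕ) (e : Bool × V) : V × Bool × ℕ := (e.2, !e.1, j + e.1.toNat)

/-- The configuration in which the walk leaves the cell `j` through the port `e`. -/
def leaving (j : ℕ) (e : Bool × V) : V × Bool × ℕ := (e.2, e.1, j + e.1.toNat)

/-- The configuration of the walk going backwards. -/
def rev (c : V × Bool × ℕ) : V × Bool × ℕ := (c.1, !c.2.1, c.2.2)

theorem rev_entering (j : ℕ) (e : Bool × V) : rev (entering j e) = leaving j e := by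
  simp [rev, entering, leaving]

theorem rev_leaving (j : ℕ) (e : Bool × V) : rev (leaving j e) = entering j e := rfl

/-- The port of a cell labeled `a` on the left (if `b`) or on the right (otherwise) of the segment
of the walk starting in the state representing `p`. -/
def gate (a : A) (p : P) (b : Bool) : Bool × V :=
  if b then (false, W.core p) else W.pass a (false, W.core p)

theorem pass_gate (a : A) (p : P) (b : Bool) : W.pass a (W.gate a p b) = W.gate a p (!b) := by
  cases b
  · exact W.pass_pass _ _
  · rfl

theorem gate_injective (a : A) (b : Bool) : Function.Injective (W.gate a · b) := by
  have h : Function.Injective fun p => (false, W.core p) :=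
    (Prod.mk_right_injective false).comp W.core_injective
  cases b
  · exact (Function.Involutive.injective (W.pass_pass a)).comp h
  · exact h

theorem pass_ne_gate {a : A} {i : Bool × V} (h : ∀ p b, i ≠ W.gate a p b) (p : P) (b : Bool) :
    W.pass a i ≠ W.gate a p b :=
  fun h' => h p (!b) (by rw [← W.pass_gate, ← h', W.pass_pass])

/-- The steps of the walk on the word `w`, except those representing elements of `P`. -/
inductive FreeStep (w : ℕ → A) : V × Bool × ℕ → V × Bool × ℕ → Prop
  | pass {j i} : (∀ p b, i ≠ W.gate (w j) p b) →
      FreeStep w (entering j i) (leaving j (W.pass (w j) i))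
  | mark {v v'} : W.mark v = some v' → FreeStep w (v, false, 0) (v', true, 0)

variable {W}

theorem FreeStep.rev {c c'} (h : W.FreeStep w c c') : W.FreeStep w (rev c') (rev c) := by
  cases h with
  | @pass j i h =>
    rw [rev_entering, rev_leaving]
    simpa only [W.pass_pass] using FreeStep.pass (W.pass_ne_gate h)
  | mark h => exact .mark (W.mark_symm h)

theorem reflTransGen_freeStep_rev {c c'} (h : Relation.ReflTransGen (W.FreeStep w) c c') :
    Relation.ReflTransGen (W.FreeStep w) (Walker.rev c') (Walker.rev c) := by
  induction h with
  | refl => exact .refl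
  | tail _ h ih => exact .head h.rev ih

variable (W w) in
/-- The walk computes the sequence `p` on the word `w`: it visits, one after the other, the
configurations representing `p i` in front of the cell `i`. -/
def Computes (p : ℕ → P) : Prop :=
  ∀ i, Relation.ReflTransGen (W.FreeStep w) (leaving i (W.gate (w i) (p i) false))
    (W.core (p (i + 1)), true, i + 1)

end Steps

section Composition

variable {P V : Type} (W : Walker A P V) (S : NoAccTrans (P × A) B)

open Classical in
/-- Whether a state of `S` is forward, as a direction of the walk. -/
noncomputable def dir {S : NoAccTrans (P × A) B} (s : S.Q) : Bool := decide (S.fwd s)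

theorem dir_of_fwd {S : NoAccTrans (P × A) B} {s : S.Q} (h : S.fwd s) : dir s = true := by
  classical exact decide_eq_true h

theorem dir_of_not_fwd {S : NoAccTrans (P × A) B} {s : S.Q} (h : ¬ S.fwd s) : dir s = false := by
  classical exact decide_eq_false h

/-- The moves of the composite transducer in a cell labeled `a`: at the gates of the segments of the
walk representing `p`, the transducer `S` reads the letter `(p, a)`, and either continues the walk
or goes back; elsewhere the walk continues. -/
inductive CellMove (a : A) : Bool × V → S.Q → List B → Bool × V → S.Q → Prop
  | simulate {p s o s'} : S.Trans s (some (p, a)) o s' →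
      CellMove a (W.gate a p (dir s)) s o (W.gate a p (!dir s')) s'
  | pass {i s} : (∀ p b, i ≠ W.gate a p b) → CellMove a i s [] (W.pass a i) s

/-- The moves of the composite transducer. -/
inductive CompositeMove :
    V × Bool × S.Q → Option A → List B → V × Bool × S.Q → Prop
  | cell {a v b s o v' b' s'} : CellMove W S a (!b, v) s o (b', v') s' →
      CompositeMove (v, b, s) (some a) o (v', b', s')
  | simulate {s o s'} : S.Trans s none o s' →
      CompositeMove (W.core W.start, false, s) none o (W.core W.start, true, s')
  | mark {v v' s} : W.mark v = some v' → CompositeMove (v, false, s) none [] (v', true, s)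

variable {W S}

theorem CellMove.det (hS : Deterministic S.toTwoWayAut) {a i s o e s' o' e' s''}
    (h : CellMove W S a i s o e s') (h' : CellMove W S a i s o' e' s'') :
    o = o' ∧ e = e' ∧ s' = s'' := by
  generalize hi : i = j at h'
  cases h with
  | simulate ht =>
    cases h' with
    | simulate ht' =>
      obtain rfl := W.gate_injective _ _ hi
      obtain ⟨rfl, rfl⟩ := ht.unique hS ht'
      exact ⟨rfl, rfl, rfl⟩
    | pass h' => exact absurd hi.symm (h' _ _)
  | pass h =>
    cases h' with
    | simulate => exact absurd hi (h _ _)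
    | pass => exact ⟨rfl, congrArg _ hi, rfl⟩

theorem CellMove.codet (hS : Codeterministic S.toTwoWayAut) {a i s o e s' o' i' s''}
    (h : CellMove W S a i s o e s') (h' : CellMove W S a i' s'' o' e s') :
    i = i' ∧ s = s'' := by
  generalize he : e = f at h'
  cases h with
  | simulate ht =>
    cases h' with
    | simulate ht' =>
      obtain rfl := W.gate_injective _ _ he
      obtain rfl := hS _ _ _ _ ht.1 ht'.1
      exact ⟨rfl, rfl⟩
    | pass h' => exact absurd he.symm (W.pass_ne_gate h' _ _)
  | pass h =>
    cases h' with
    | simulate => exact absurd he (W.pass_ne_gate h _ _)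
    | pass => exact ⟨Function.Involutive.injective (W.pass_pass a) he, rfl⟩

theorem CompositeMove.cellMove {a : A} {v b s o v' b' s'}
    (h : CompositeMove W S (v, b, s) (some a) o (v', b', s')) :
    CellMove W S a (!b, v) s o (b', v') s' := by
  cases h with
  | cell h => exact h

theorem CompositeMove.det (hS : Deterministic S.toTwoWayAut) {q a o q' o' q''}
    (h : CompositeMove W S q a o q') (h' : CompositeMove W S q a o' q'') : o = o' ∧ q' = q'' := by
  cases h with
  | cell h =>
    cases h' with | cell h' => ?_
    obtain ⟨rfl, he, rfl⟩ := h.det hS h'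
    cases he
    exact ⟨rfl, rfl⟩
  | simulate h =>
    cases h' with
    | simulate h' =>
      obtain ⟨rfl, rfl⟩ := h.unique hS h'
      exact ⟨rfl, rfl⟩
    | mark h' => exact nomatch W.mark_core_start.symm.trans h'
  | mark h =>
    cases h' with
    | simulate => exact nomatch W.mark_core_start.symm.trans h
    | mark h' =>
      cases h.symm.trans h'
      exact ⟨rfl, rfl⟩

theorem CompositeMove.codet (hS : Codeterministic S.toTwoWayAut) {q a o q' o' q''}
    (h : CompositeMove W S q a o q') (h' : CompositeMove W S q'' a o' q') : q = q'' := by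
  cases h with
  | cell h =>
    cases h' with | cell h' => ?_
    obtain ⟨hi, rfl⟩ := h.codet hS h'
    simp_all
  | simulate h =>
    cases h' with
    | simulate h' => rw [hS _ _ _ _ h.1 h'.1]
    | mark h' => exact nomatch W.mark_core_start.symm.trans (W.mark_symm h')
  | mark h =>
    cases h' with
    | simulate => exact nomatch W.mark_core_start.symm.trans (W.mark_symm h)
    | mark h' =>
      cases (W.mark_symm h).symm.trans (W.mark_symm h')
      rfl

variable (W) [Finite V] (hS : Reversible S.toTwoWayAut)

/-- The composition of the walker `W` with the reversible transducer `S` reading the sequence that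
it computes along with its input. -/
noncomputable def composite : NoAccTrans A B :=
  ReversibleMoves.toTrans
    { Q := V × Bool × S.Q
      finQ := Fintype.ofFinite _
      fwd := fun q => q.2.1 = true
      init := (W.core W.start, true, S.init)
      init_fwd := rfl
      Move := CompositeMove W S
      marker := by rintro _ _ _ (⟨⟩ | ⟨⟩) <;> simp
      det := CompositeMove.det hS.1
      codet := CompositeMove.codet hS.2 }

theorem reversible_composite : Reversible (W.composite hS).toTwoWayAut :=
  ReversibleMoves.reversible _

variable {W hS}

theorem trans_composite_iff {p q : (W.composite hS).Q} {a : Option A} {o : List B} :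
    (W.composite hS).Trans p a o q ↔ CompositeMove W S p a o q :=
  ReversibleMoves.trans_iff

variable (W hS) in
/-- The configuration of the composite transducer made of the configuration `c` of the walk and the
state `s` of `S`. -/
def pair (c : V × Bool × ℕ) (s : S.Q) : (W.composite hS).Q × ℕ := ((c.1, c.2.1, s), c.2.2)

variable (W hS) in
/-- The configuration of the composite transducer simulating the configuration `c` of `S` on a word
annotated by the sequence `p`. -/
noncomputable def simulate (p : ℕ → P) (c : S.Q × ℕ) : (W.composite hS).Q × ℕ :=
  pair W hS (W.core (p c.2), dir c.1, c.2) c.1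

variable {w : ℕ → A} {p : ℕ → P} {s s' : S.Q} {o : List B}

theorem entryPos_composite (j : ℕ) (e : Bool × V) (s : S.Q) :
    (W.composite hS).entryPos (pair W hS (entering j e) s).1 j = j + e.1.toNat := by
  obtain ⟨_ | _, v⟩ := e
  · have : (W.composite hS).fwd (v, true, s) := rfl
    exact TwoWayAut.entryPos_of_fwd this j
  · have : ¬ (W.composite hS).fwd (v, false, s) := Bool.false_ne_true
    exact TwoWayAut.entryPos_of_not_fwd this j

theorem exitPos_composite (j : ℕ) (e : Bool × V) (s : S.Q) :
    (W.composite hS).exitPos (pair W hS (leaving j e) s).1 j = j + e.1.toNat := by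
  obtain ⟨_ | _, v⟩ := e
  · have : ¬ (W.composite hS).fwd (v, false, s) := Bool.false_ne_true
    exact TwoWayAut.exitPos_of_not_fwd this j
  · have : (W.composite hS).fwd (v, true, s) := rfl
    exact TwoWayAut.exitPos_of_fwd this j

theorem CellMove.outStep {j : ℕ} {i e} (h : CellMove W S (w j) i s o e s') :
    OutStep (W.composite hS) w (pair W hS (entering j i) s) o (pair W hS (leaving j e) s') := by
  have ht : (W.composite hS).Trans (pair W hS (entering j i) s).1 (some (w j)) o
      (pair W hS (leaving j e) s').1 := trans_composite_iff.2
      (.cell (by simpa only [entering, leaving, Bool.not_not] using h))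
  have := OutStep.letter ht
  rw [entryPos_composite, exitPos_composite] at this
  exact this

theorem FreeStep.outStep {c c'} (h : W.FreeStep w c c') (s : S.Q) :
    OutStep (W.composite hS) w (pair W hS c s) [] (pair W hS c' s) := by
  cases h with
  | pass h => exact (CellMove.pass h).outStep
  | mark h => exact .marker (trans_composite_iff.2 (.mark h))

variable (hS) in
theorem exists_run_of_freeStep {c c'} (h : Relation.ReflTransGen (W.FreeStep w) c c') (s : S.Q) :
    ∃ k, Run (W.composite hS) w k (pair W hS c s) [] (pair W hS c' s) := by
  induction h with
  | refl => exact ⟨0, .nil _⟩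
  | tail _ h ih =>
    obtain ⟨k, hk⟩ := ih
    exact ⟨_, hk.trans (h.outStep s).run⟩

theorem exists_run_simulate_entering (h : W.Computes w p) (s : S.Q) (i : ℕ) :
    ∃ k, Run (W.composite hS) w k (simulate W hS p (s, S.entryPos s i)) []
      (pair W hS (entering i (W.gate (w i) (p i) (dir s))) s) := by
  by_cases hs : S.fwd s
  · have hdir : dir s = true := dir_of_fwd hs
    rw [S.entryPos_of_fwd hs, simulate, hdir]
    exact ⟨0, .nil _⟩
  · have hdir : dir s = false := dir_of_not_fwd hs
    rw [S.entryPos_of_not_fwd hs, simulate, hdir, ← rev_leaving]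
    exact exists_run_of_freeStep hS (reflTransGen_freeStep_rev (h i)) s

theorem exists_run_leaving_simulate (h : W.Computes w p) (s : S.Q) (i : ℕ) :
    ∃ k, Run (W.composite hS) w k
      (pair W hS (leaving i (W.gate (w i) (p i) (!dir s))) s) []
      (simulate W hS p (s, S.exitPos s i)) := by
  by_cases hs : S.fwd s
  · have hdir : dir s = true := dir_of_fwd hs
    rw [S.exitPos_of_fwd hs, simulate, hdir]
    exact exists_run_of_freeStep hS (h i) s
  · have hdir : dir s = false := dir_of_not_fwd hs
    rw [S.exitPos_of_not_fwd hs, simulate, hdir]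
    exact ⟨0, .nil _⟩

theorem exists_run_simulate (hp : p 0 = W.start) (h : W.Computes w p) {c c'}
    (hstep : OutStep S (fun i => (p i, w i)) c o c') :
    ∃ k, 1 ≤ k ∧ Run (W.composite hS) w k (simulate W hS p c) o (simulate W hS p c') := by
  obtain ⟨s, _⟩ := c
  obtain ⟨s', _⟩ := c'
  obtain ⟨i, ht, hc, hc'⟩ | ⟨ht, hc, hc'⟩ := outStep_iff.1 hstep <;>
    dsimp only at ht hc hc' <;> subst hc hc'
  · obtain ⟨k, hk⟩ := exists_run_simulate_entering (hS := hS) h s i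
    obtain ⟨k', hk'⟩ := exists_run_leaving_simulate (hS := hS) h s' i
    refine ⟨_, ?_, by simpa using hk.trans ((CellMove.simulate ht).outStep.run.trans hk')⟩
    omega
  · refine ⟨1, le_rfl, OutStep.run ?_⟩
    have hdir : dir s = false := dir_of_not_fwd (S.marker _ _ ht.1).1
    have hdir' : dir s' = true := dir_of_fwd (S.marker _ _ ht.1).2
    rw [simulate, simulate, hp, hdir, hdir']
    exact .marker (trans_composite_iff.2 (.simulate ht))

theorem exists_cellMove_of_outStep {j : ℕ} {i c}
    (h : OutStep (W.composite hS) w (pair W hS (entering j i) s) o c) :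
    ∃ e s', CellMove W S (w j) i s o e s' := by
  obtain ⟨⟨v', b', s'⟩, j'⟩ := c
  have h' : OutStep (W.composite hS) w ((pair W hS (entering j i) s).1,
      (W.composite hS).entryPos (pair W hS (entering j i) s).1 j) o ((v', b', s'), j') := by
    rw [entryPos_composite]
    exact h
  have hmove := (trans_composite_iff.1 h'.trans_of_entryPos.1).cellMove
  exact ⟨_, _, by simpa only [entering, Bool.not_not] using hmove⟩

theorem stuck_entering {i : ℕ} (h : Stuck S (fun i => (p i, w i)) (s, S.entryPos s i)) :
    Stuck (W.composite hS) w (pair W hS (entering i (W.gate (w i) (p i) (dir s))) s) := by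
  intro o c hc
  obtain ⟨e, s', hmove⟩ := exists_cellMove_of_outStep hc
  generalize hi : W.gate (w i) (p i) (dir s) = i' at hmove
  cases hmove with
  | simulate ht =>
    obtain rfl := W.gate_injective _ _ hi
    exact h _ _ (.letter ht)
  | pass hne => exact hne _ _ hi.symm

theorem stuck_simulate_zero (hp : p 0 = W.start) (hs : ¬ S.fwd s)
    (h : Stuck S (fun i => (p i, w i)) (s, 0)) :
    Stuck (W.composite hS) w (simulate W hS p (s, 0)) := by
  intro o c hc
  rw [simulate, hp, dir_of_not_fwd hs] at hc
  have hfwd : ¬ (W.composite hS).fwd (W.core W.start, false, s) := Bool.false_ne_true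
  have hmove := trans_composite_iff.1 (OutStep.trans_of_zero hfwd hc).1
  generalize c.1 = q at hmove
  cases hmove with
  | simulate ht => exact h _ _ (.marker ht)
  | mark h => exact nomatch W.mark_core_start.symm.trans h

variable (hS) in
theorem realizes_composite_iff (hp : p 0 = W.start) (h : W.Computes w p) (x : ℕ → B) :
    (W.composite hS).Realizes w x ↔ S.Realizes (fun i => (p i, w i)) x := by
  refine (realizes_iff_of_simulation hS.1 (W.reversible_composite hS).1 (simulate W hS p) ?_
    (fun _ => rfl) (fun _ _ _ => exists_run_simulate hp h) ?_ x).symm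
  · have hdir : dir S.init = true := dir_of_fwd S.init_fwd
    rw [simulate, hp, hdir]
    rfl
  · rintro ⟨s, j⟩ hstuck
    obtain ⟨i, rfl⟩ | ⟨hs, rfl⟩ := TwoWayAut.eq_entryPos_or s j
    · obtain ⟨k, hk⟩ := exists_run_simulate_entering (hS := hS) h s i
      exact ⟨k, [], _, hk, stuck_entering hstuck⟩
    · exact ⟨0, [], _, .nil _, stuck_simulate_zero hp hs hstuck⟩

end Composition

end Walker

namespace Walker

section Orbit

variable {P V : Type} (W : Walker A P V) (w : ℕ → A)

/-- The configuration following a given configuration of the walk. -/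
def next : V × Bool × ℕ → Option (V × Bool × ℕ)
  | (v, true, j) => some (leaving j (W.pass (w j) (false, v)))
  | (v, false, j + 1) => some (leaving j (W.pass (w j) (true, v)))
  | (v, false, 0) => (W.mark v).map fun v' => (v', true, 0)

variable {W w}

theorem eq_entering_or (c : V × Bool × ℕ) : (∃ j i, c = entering j i) ∨ ∃ v, c = (v, false, 0) := by
  obtain ⟨v, _ | _, _ | j⟩ := c
  · exact .inr ⟨v, rfl⟩
  · exact .inl ⟨j, (true, v), rfl⟩
  · exact .inl ⟨0, (false, v), rfl⟩
  · exact .inl ⟨j + 1, (false, v), rfl⟩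

theorem next_entering (j : ℕ) (i : Bool × V) :
    W.next w (entering j i) = some (leaving j (W.pass (w j) i)) := by
  obtain ⟨_ | _, v⟩ := i <;> rfl

theorem rev_rev (c : V × Bool × ℕ) : rev (rev c) = c := by
  simp only [rev, Bool.not_not]

theorem ne_rev (c : V × Bool × ℕ) : c ≠ rev c := fun h =>
  (Bool.not_ne_self c.2.1) (congrArg (fun c => c.2.1) h).symm

/-- Time reversal: the steps of the walk taken backwards are steps of the walk. -/
theorem next_rev {c c' : V × Bool × ℕ} (h : W.next w c = some c') :
    W.next w (rev c') = some (rev c) := by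
  obtain ⟨j, i, rfl⟩ | ⟨v, rfl⟩ := eq_entering_or c
  · rw [next_entering] at h
    cases h
    rw [rev_leaving, next_entering, W.pass_pass, rev_entering]
  · obtain ⟨v', hv, rfl⟩ := Option.map_eq_some_iff.1 h
    exact Option.map_eq_some_iff.2 ⟨v, W.mark_symm hv, rfl⟩

theorem next_ne_rev (c : V × Bool × ℕ) : W.next w c ≠ some (rev c) := by
  intro h
  obtain ⟨j, i, rfl⟩ | ⟨v, rfl⟩ := eq_entering_or c
  · rw [next_entering, rev_entering] at h
    have hj := congrArg (fun c => c.2.1) (Option.some_injective _ h)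
    have hv := congrArg (fun c => c.1) (Option.some_injective _ h)
    exact W.pass_ne _ _ (Prod.ext hj hv)
  · obtain ⟨v', hv, hv'⟩ := Option.map_eq_some_iff.1 h
    cases hv'
    exact W.mark_ne v hv

theorem ne_rev_of_next {c : ℕ → V × Bool × ℕ} (k : ℕ) {i : ℕ}
    (h : ∀ s < i + k, W.next w (c s) = some (c (s + 1))) : c i ≠ rev (c (i + k)) := by
  induction k using Nat.twoStepInduction generalizing i with
  | zero => exact ne_rev _
  | one =>
    intro he
    have := h i (by omega)
    rw [← rev_rev (c (i + 1)), ← he] at this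
    exact next_ne_rev _ this
  | more k ih _ =>
    intro he
    have hlast := next_rev (h (i + k + 1) (by omega))
    rw [show i + k + 1 + 1 = i + (k + 2) by omega, ← he, h i (by omega)] at hlast
    refine ih (i := i + 1) (fun s hs => h s (by omega)) ?_
    rw [Option.some_injective _ hlast, Nat.add_right_comm]

variable (W w) in
/-- The walk on the word `w`, starting in front of the first cell; it is eventually constant if it
gets stuck. -/
def orbit : ℕ → V × Bool × ℕ
  | 0 => (W.core W.start, true, 0)
  | t + 1 => (W.next w (orbit t)).getD (orbit t)

theorem next_orbit {t : ℕ} (h : W.next w (W.orbit w t) ≠ none) :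
    W.next w (W.orbit w t) = some (W.orbit w (t + 1)) := by
  obtain ⟨c, hc⟩ := Option.ne_none_iff_exists'.1 h
  rw [orbit, hc, Option.getD_some]

variable (W w) in
theorem exists_forall_orbit_lt (t : ℕ) : ∃ N, ∀ s < t, (W.orbit w s).2.2 < N := by
  obtain ⟨N, hN⟩ := Finset.exists_nat_subset_range
    ((Finset.range t).image fun s => (W.orbit w s).2.2)
  exact ⟨N, fun s hs => Finset.mem_range.1 <|
    hN (Finset.mem_image_of_mem _ (Finset.mem_range.2 hs))⟩

theorem snd_eq_of_next {c c' : V × Bool × ℕ} {N : ℕ} (h : W.next w c = some c')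
    (hc : c.2.2 < N) (hc' : N ≤ c'.2.2) : c'.2 = (true, N) := by
  obtain ⟨j, i, rfl⟩ | ⟨v, rfl⟩ := eq_entering_or c
  · rw [next_entering] at h
    cases h
    simp only [entering] at hc
    simp only [leaving] at hc' ⊢
    cases hd : (W.pass (w j) i).1 <;>
      simp only [hd, Bool.toNat_true, Bool.toNat_false, Prod.mk.injEq, true_and] at hc' ⊢ <;>
      omega
  · obtain ⟨v', -, rfl⟩ := Option.map_eq_some_iff.1 h
    exact absurd hc' hc.not_ge

variable (hnext : ∀ t, W.next w (W.orbit w t) = some (W.orbit w (t + 1)))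
include hnext

theorem orbit_ne_rev (s t : ℕ) : W.orbit w s ≠ rev (W.orbit w t) := by
  rcases le_total s t with h | h <;> obtain ⟨k, rfl⟩ := Nat.exists_eq_add_of_le h
  · exact ne_rev_of_next k fun s _ => hnext s
  · intro he
    refine ne_rev_of_next (c := W.orbit w) (i := t) k (fun s _ => hnext s) ?_
    rw [he, rev_rev]

theorem orbit_injective : Function.Injective (W.orbit w) := by
  have hne (s k : ℕ) : W.orbit w s ≠ W.orbit w (s + k + 1) := by
    induction s with
    | zero =>
      intro he
      have := next_rev (hnext (0 + k))
      rw [← he] at this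
      simp [orbit, rev, next, W.mark_core_start] at this
    | succ s ih =>
      intro he
      have h := next_rev (hnext s)
      have h' := next_rev (hnext (s + k + 1))
      rw [show s + k + 1 + 1 = s + 1 + k + 1 by omega, ← he, h] at h'
      exact ih (by rw [← rev_rev (W.orbit w s), Option.some_injective _ h', rev_rev])
  intro s t he
  rcases lt_trichotomy s t with hst | rfl | hst
  · obtain ⟨k, rfl⟩ := Nat.exists_eq_add_of_lt hst
    exact absurd he (hne s k)
  · rfl
  · obtain ⟨k, rfl⟩ := Nat.exists_eq_add_of_lt hst
    exact absurd he.symm (hne t k)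

theorem exists_le_orbit [Finite V] (N : ℕ) : ∃ t, N ≤ (W.orbit w t).2.2 := by
  by_contra! hlt
  have hfin : (Set.univ ×ˢ Set.univ ×ˢ Set.Iio N : Set (V × Bool × ℕ)).Finite :=
    Set.finite_univ.prod (Set.finite_univ.prod (Set.finite_Iio N))
  have hmem (t : ℕ) : W.orbit w t ∈ (Set.univ ×ˢ Set.univ ×ˢ Set.Iio N : Set (V × Bool × ℕ)) :=
    ⟨trivial, trivial, hlt t⟩
  exact Set.infinite_of_injective_forall_mem (orbit_injective hnext) hmem hfin

theorem orbit_snd_eq {t N : ℕ} (ht : N ≤ (W.orbit w t).2.2)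
    (hlt : ∀ s < t, (W.orbit w s).2.2 < N) : (W.orbit w t).2 = (true, N) := by
  cases t with
  | zero => exact Prod.ext rfl (Nat.le_zero.1 ht).symm
  | succ t => exact snd_eq_of_next (hnext t) (hlt t (Nat.lt_succ_self t)) ht

omit hnext in
theorem freeStep_of_next {c c' : V × Bool × ℕ} (h : W.next w c = some c')
    (hc : ∀ q, c.1 ≠ W.core q) (hc' : ∀ q, c'.1 = W.core q → c'.2.1 = true) :
    W.FreeStep w c c' := by
  obtain ⟨j, i, rfl⟩ | ⟨v, rfl⟩ := eq_entering_or c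
  · rw [next_entering] at h
    cases h
    refine .pass fun q b hi => ?_
    cases b with
    | false =>
      have hpass : W.pass (w j) i = (false, W.core q) := by rw [hi, gate, if_neg, W.pass_pass]; simp
      rw [hpass] at hc'
      exact Bool.false_ne_true (hc' q rfl)
    | true => exact hc q (congrArg Prod.snd hi)
  · obtain ⟨v', hv, rfl⟩ := Option.map_eq_some_iff.1 h
    exact .mark hv

/-- As the walk never passes twice at the same place, it represents an element of `P` only at the
times `T i`. -/
theorem computes_of_orbit {p : ℕ → P} {T : ℕ → ℕ} (hT : StrictMono T)
    (hcore : ∀ i, W.orbit w (T i) = (W.core (p i), true, i))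
    (huniq : ∀ s q, (W.orbit w s).1 = W.core q → q = p (W.orbit w s).2.2) : W.Computes w p := by
  have htime (s : ℕ) (q : P) (hs : (W.orbit w s).1 = W.core q) : s = T (W.orbit w s).2.2 := by
    have hq := huniq s q hs
    generalize hj : (W.orbit w s).2.2 = j at hq
    subst hq
    cases hd : (W.orbit w s).2.1 with
    | true => exact orbit_injective hnext ((Prod.ext hs (Prod.ext hd hj)).trans (hcore j).symm)
    | false =>
      refine absurd ?_ (orbit_ne_rev hnext s (T j))
      rw [hcore]
      exact Prod.ext hs (Prod.ext hd hj)
  have hnot (i s : ℕ) (hs : T i < s) (hs' : s < T (i + 1)) (q : P) :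
      (W.orbit w s).1 ≠ W.core q := by
    intro hq
    have hj := htime s q hq
    rw [hj] at hs hs'
    have := hT.lt_iff_lt.1 hs
    have := hT.lt_iff_lt.1 hs'
    omega
  intro i
  have hfirst : W.orbit w (T i + 1) = leaving i (W.gate (w i) (p i) false) := by
    have := hnext (T i)
    rw [hcore] at this
    exact (Option.some_injective _ this).symm
  rw [← hfirst, ← hcore (i + 1)]
  suffices hpath : ∀ s ∈ Set.Ico (T i + 1) (T (i + 1)),
      W.FreeStep w (W.orbit w s) (W.orbit w (s + 1)) from
    (reflTransGen_of_succ_of_le (fun s t => W.FreeStep w (W.orbit w s) (W.orbit w t)) hpath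
      (hT (Nat.lt_succ_self i))).lift (W.orbit w) fun _ _ => id
  rintro s ⟨hs, hs'⟩
  refine freeStep_of_next (hnext s) (hnot i s (by omega) hs') fun q hq => ?_
  rcases eq_or_ne (s + 1) (T (i + 1)) with h | h
  · rw [h, hcore]
  · exact absurd hq (hnot i (s + 1) (by omega) (by omega) q)

end Orbit

end Walker

/-! ### The climbing walker -/

section Contour

variable {P : Type} [LinearOrder P]

/-- The strict order of `P` if `b` holds, the reverse order otherwise. -/
def SideLT (b : Bool) (p q : P) : Prop := if b then p < q else q < p

theorem SideLT.irrefl (b : Bool) (p : P) : ¬ SideLT b p p := by cases b <;> exact lt_irrefl p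

theorem SideLT.trans {b : Bool} {p q r : P} (h : SideLT b p q) (h' : SideLT b q r) :
    SideLT b p r := by
  cases b
  · exact lt_trans (α := P) h' h
  · exact lt_trans (α := P) h h'

theorem sideLT_not {b : Bool} {p q : P} : SideLT (!b) p q ↔ SideLT b q p := by
  cases b <;> exact Iff.rfl

theorem SideLT.trichotomy (b : Bool) (p q : P) : SideLT b p q ∨ p = q ∨ SideLT b q p := by
  cases b
  · exact (lt_trichotomy q p).imp_right (Or.imp_left Eq.symm)
  · exact lt_trichotomy p q

theorem SideLT.eq_of_not {b : Bool} {p q : P} (h : ¬ SideLT b p q) (h' : ¬ SideLT b q p) : p = q :=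
  ((trichotomy b p q).resolve_left h).resolve_right h'

theorem SideLT.asymm {b : Bool} {p q : P} (h : SideLT b p q) : ¬ SideLT b q p :=
  fun h' => irrefl b p (h.trans h')

theorem SideLT.eq_not {b b' : Bool} {p q : P} (h : SideLT b p q) (h' : SideLT b' q p) :
    b' = !b := by
  rcases Bool.eq_or_eq_not b' b with rfl | hb
  · exact absurd h' h.asymm
  · exact hb

theorem SideLT.wellFounded [Finite P] (b : Bool) : WellFounded (SideLT b : P → P → Prop) := by
  have : IsTrans P (SideLT b) := ⟨fun _ _ _ => SideLT.trans⟩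
  have : Std.Irrefl (SideLT b : P → P → Prop) := ⟨SideLT.irrefl b⟩
  exact Finite.wellFounded_of_trans_of_irrefl _

/-- The map `f : P → P` is seen as a layer of a planar forest, with an edge from each `p` on the
left to `f p` on the right, and a token `(p, b)` follows the contour of this forest along the side
`b` of the vertex `p`. This relation connects the two ends `(false, p, b)` (on the left) and
`(true, p, b)` (on the right) of the paths of tokens through the layer. -/
inductive ContourMove (f : P → P) : Bool × P × Bool → Bool × P × Bool → Prop
  | sibling {p p' b} : f p = f p' → SideLT b p p' →
      (∀ z, f z = f p → ¬ (SideLT b p z ∧ SideLT b z p')) →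
      ContourMove f (false, p, b) (false, p', !b)
  | forth {p b} : (∀ z, f z = f p → ¬ SideLT b p z) → ContourMove f (false, p, b) (true, f p, b)
  | back {p b} : (∀ z, f z = f p → ¬ SideLT b p z) → ContourMove f (true, f p, b) (false, p, b)
  | leaf {q b} : (∀ z, f z ≠ q) → ContourMove f (true, q, b) (true, q, !b)

namespace ContourMove

variable {f : P → P} {i i' i'' : Bool × P × Bool}

theorem symm (h : ContourMove f i i') : ContourMove f i' i := by
  cases h with
  | @sibling p p' b h hlt hz =>
    have : ContourMove f (false, p', !b) (false, p, !!b) :=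
      sibling h.symm (sideLT_not.2 hlt) fun z hf hz' =>
        hz z (hf.trans h.symm) ⟨sideLT_not.1 hz'.2, sideLT_not.1 hz'.1⟩
    rwa [Bool.not_not] at this
  | forth hz => exact back hz
  | back hz => exact forth hz
  | @leaf q b hz =>
    have : ContourMove f (true, q, !b) (true, q, !!b) := leaf hz
    rwa [Bool.not_not] at this

theorem unique (h : ContourMove f i i') (h' : ContourMove f i i'') : i' = i'' := by
  cases h with
  | sibling hf hlt hz =>
    cases h' with
    | sibling hf' hlt' hz' =>
      rw [SideLT.eq_of_not (fun hlt'' => hz' _ hf.symm ⟨hlt, hlt''⟩)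
        fun hlt'' => hz _ hf'.symm ⟨hlt', hlt''⟩]
    | forth hz' => exact absurd hlt (hz' _ hf.symm)
  | forth hz =>
    cases h' with
    | sibling hf' hlt' _ => exact absurd hlt' (hz _ hf'.symm)
    | forth => rfl
  | @back p b hz =>
    generalize hi : (true, f p, b) = j at h'
    cases h' with
    | sibling => cases hi
    | forth => cases hi
    | @back p' b' hz' =>
      simp only [Prod.mk.injEq, true_and] at hi
      obtain ⟨hf, rfl⟩ := hi
      rw [SideLT.eq_of_not (hz _ hf.symm) (hz' _ hf)]
    | leaf hz' =>
      simp only [Prod.mk.injEq, true_and] at hi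
      exact absurd hi.1 (hz' p)
  | @leaf q b hz =>
    generalize hi : (true, q, b) = j at h'
    cases h' with
    | sibling => cases hi
    | forth => cases hi
    | @back p' b' hz' =>
      simp only [Prod.mk.injEq, true_and] at hi
      exact absurd hi.1.symm (hz p')
    | leaf hz' =>
      cases hi
      rfl

theorem ne (h : ContourMove f i i') : i' ≠ i := by
  cases h <;> simp

theorem exists_move [Finite P] (f : P → P) (i : Bool × P × Bool) : ∃ i', ContourMove f i i' := by
  obtain ⟨_ | _, p, b⟩ := i
  · by_cases h : ∃ z, f z = f p ∧ SideLT b p z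
    · obtain ⟨z, ⟨hf, hlt⟩, hmin⟩ := (SideLT.wellFounded b).has_min {z | f z = f p ∧ SideLT b p z} h
      exact ⟨_, sibling hf.symm hlt fun y hy hz => hmin y ⟨hy, hz.1⟩ hz.2⟩
    · exact ⟨_, forth fun z hf hlt => h ⟨z, hf, hlt⟩⟩
  · by_cases h : ∃ z, f z = p
    · obtain ⟨z, rfl, hmin⟩ := (SideLT.wellFounded (!b)).has_min {z | f z = p} h
      exact ⟨_, back fun y hy hlt => hmin y hy (sideLT_not.2 hlt)⟩
    · exact ⟨_, leaf fun z hz => h ⟨z, hz⟩⟩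

end ContourMove

variable [Finite P]

/-- The involution connecting the ends of the paths of tokens through a layer. -/
noncomputable def contour (f : P → P) (i : Bool × P × Bool) : Bool × P × Bool :=
  (ContourMove.exists_move f i).choose

theorem contourMove_contour (f : P → P) (i : Bool × P × Bool) : ContourMove f i (contour f i) :=
  (ContourMove.exists_move f i).choose_spec

theorem contour_contour (f : P → P) (i : Bool × P × Bool) : contour f (contour f i) = i :=
  (contourMove_contour f _).unique (contourMove_contour f i).symm

theorem contour_ne (f : P → P) (i : Bool × P × Bool) : contour f i ≠ i :=
  (contourMove_contour f i).ne

end Contour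

/-- The states of the climbing walker: two tokens following contours, meant to go around the set of
states whose paths meet the path of a given one. -/
abbrev TokenPair (P : Type) : Type := (P × Bool) × (P × Bool)

namespace TokenPair

section Moves

variable {P : Type} [LinearOrder P] [Finite P]

/-- The moves of pairs of tokens through a layer: a token turning around in the layer does so while
the other one waits, the second token having priority, and otherwise both go through. -/
noncomputable def pass (f : P → P) (i : Bool × TokenPair P) : Bool × TokenPair P :=
  if (contour f (i.1, i.2.2)).1 = i.1 then (i.1, i.2.1, (contour f (i.1, i.2.2)).2)
  else if (contour f (i.1, i.2.1)).1 = i.1 then (i.1, (contour f (i.1, i.2.1)).2, i.2.2)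
  else (!i.1, (contour f (i.1, i.2.1)).2, (contour f (i.1, i.2.2)).2)

variable {f : P → P} {d : Bool} {x y x' y' : P × Bool}

theorem pass_of_snd (hy : contour f (d, y) = (d, y')) : pass f (d, x, y) = (d, x, y') := by
  simp only [pass, hy, if_true]

theorem pass_of_fst (hy : contour f (d, y) = (!d, y')) (hx : contour f (d, x) = (d, x')) :
    pass f (d, x, y) = (d, x', y) := by
  simp only [pass, hy, hx, if_true, Bool.not_eq_self, if_false]

theorem pass_of_both (hy : contour f (d, y) = (!d, y')) (hx : contour f (d, x) = (!d, x')) :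
    pass f (d, x, y) = (!d, x', y') := by
  simp only [pass, hy, hx, Bool.not_eq_self, if_false]

theorem exists_contour_eq (f : P → P) (d : Bool) (x : P × Bool) :
    (∃ x', contour f (d, x) = (d, x')) ∨ ∃ x', contour f (d, x) = (!d, x') := by
  rcases Bool.eq_or_eq_not (contour f (d, x)).1 d with h | h
  · exact .inl ⟨_, Prod.ext h rfl⟩
  · exact .inr ⟨_, Prod.ext h rfl⟩

theorem pass_pass (f : P → P) (i : Bool × TokenPair P) : pass f (pass f i) = i := by
  obtain ⟨d, x, y⟩ := i
  have hinv {d d' x x'} (h : contour f (d, x) = (d', x')) : contour f (d', x') = (d, x) := by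
    rw [← h, contour_contour]
  obtain ⟨y', hy⟩ | ⟨y', hy⟩ := exists_contour_eq f d y
  · rw [pass_of_snd hy, pass_of_snd (hinv hy)]
  · obtain ⟨x', hx⟩ | ⟨x', hx⟩ := exists_contour_eq f d x
    · rw [pass_of_fst hy hx, pass_of_fst hy (hinv hx)]
    · have hback {x x'} (h : contour f (d, x) = (!d, x')) :
          contour f (!d, x') = (!!d, x) := by rw [hinv h, Bool.not_not]
      rw [pass_of_both hy hx, pass_of_both (hback hy) (hback hx), Bool.not_not]

theorem pass_ne (f : P → P) (i : Bool × TokenPair P) : pass f i ≠ i := by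
  obtain ⟨d, x, y⟩ := i
  obtain ⟨y', hy⟩ | ⟨y', hy⟩ := exists_contour_eq f d y
  · rw [pass_of_snd hy]
    intro h
    cases h
    exact contour_ne f _ hy
  · obtain ⟨x', hx⟩ | ⟨x', hx⟩ := exists_contour_eq f d x
    · rw [pass_of_fst hy hx]
      intro h
      cases h
      exact contour_ne f _ hx
    · rw [pass_of_both hy hx]
      exact fun h => Bool.not_ne_self d (congrArg Prod.fst h)

end Moves

section Marks

variable {P : Type} [DecidableEq P] {p₀ : P} {v v' : TokenPair P}

/-- The moves of pairs of tokens on the end-marker: a token may turn around anywhere but at the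
state `p₀`. -/
def mark (p₀ : P) (v : TokenPair P) : Option (TokenPair P) :=
  if v.2.1 ≠ p₀ then some (v.1, v.2.1, !v.2.2)
  else if v.1.1 ≠ p₀ then some ((v.1.1, !v.1.2), v.2)
  else none

theorem mark_eq_some_iff : mark p₀ v = some v' ↔
    v.2.1 ≠ p₀ ∧ v' = (v.1, v.2.1, !v.2.2) ∨
      v.2.1 = p₀ ∧ v.1.1 ≠ p₀ ∧ v' = ((v.1.1, !v.1.2), v.2) := by
  unfold mark
  split_ifs with h h' <;> simp_all [eq_comm]

theorem mark_eq_none_iff : mark p₀ v = none ↔ v.2.1 = p₀ ∧ v.1.1 = p₀ := by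
  unfold mark
  split_ifs with h h' <;> simp_all

theorem mark_symm (h : mark p₀ v = some v') : mark p₀ v' = some v := by
  rw [mark_eq_some_iff] at h ⊢
  rcases h with ⟨hy, rfl⟩ | ⟨hy, hx, rfl⟩
  · exact .inl ⟨hy, by simp only [Bool.not_not]⟩
  · exact .inr ⟨hy, hx, by simp only [Bool.not_not]⟩

theorem mark_ne (v : TokenPair P) : mark p₀ v ≠ some v := by
  intro h
  rcases mark_eq_some_iff.1 h with ⟨-, h⟩ | ⟨-, -, h⟩
  · exact Bool.not_ne_self v.2.2 (congrArg (fun v => v.2.2) h).symm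
  · exact Bool.not_ne_self v.1.2 (congrArg (fun v => v.1.2) h).symm

end Marks

/-- The two tokens on both sides of the state `p`. -/
def around {P : Type} (p : P) : TokenPair P := ((p, false), (p, true))

theorem around_injective {P : Type} : Function.Injective (around : P → TokenPair P) :=
  fun _ _ h => congrArg (fun v => v.1.1) h

end TokenPair

section Regions

variable {P : Type} [LinearOrder P]

/-- The state `q` in front of the cell `j` is on the side `b` of the path `p`, and its path meets
`p` at a position at most `N`. -/
inductive Merging (δ : P → A → P) (w : ℕ → A) (p : ℕ → P) (N : ℕ) (b : Bool) : P → ℕ → Prop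
  | meet {q j} : j < N → SideLT b (p j) q → δ q (w j) = p (j + 1) → Merging δ w p N b q j
  | step {q j} : Merging δ w p N b (δ q (w j)) (j + 1) → Merging δ w p N b q j

/-- The token `x` in front of the cell `j` is on the side `b` of the path `p`, at a state that meets
`p` at a position at most `N`. -/
def TokenRegion (δ : P → A → P) (w : ℕ → A) (p : ℕ → P) (N : ℕ) (b : Bool) (j : ℕ)
    (x : P × Bool) : Prop :=
  x = (p j, b) ∧ j ≤ N ∨ Merging δ w p N b x.1 j

/-- The region in which the climbing walker remains until it reaches the position `N`. -/
def Region (δ : P → A → P) (w : ℕ → A) (p : ℕ → P) (N j : ℕ) (v : TokenPair P) : Prop :=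
  TokenRegion δ w p N false j v.1 ∧ TokenRegion δ w p N true j v.2

variable {δ : P → A → P} {w : ℕ → A} {p : ℕ → P} {N j : ℕ} {b : Bool}

theorem Merging.lt {q : P} (h : Merging δ w p N b q j) : j < N := by
  induction h with
  | meet hj => exact hj
  | step _ ih => omega

theorem TokenRegion.of_ne {q : P} {c : Bool} (h : TokenRegion δ w p N b j (q, c))
    (hq : q ≠ p j) (c' : Bool) : TokenRegion δ w p N b j (q, c') :=
  h.elim (fun h => absurd (congrArg Prod.fst h.1) hq) .inr

theorem TokenRegion.eq_of_top {x : P × Bool} (h : TokenRegion δ w p N b N x) : x = (p N, b) :=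
  h.elim (fun h => h.1) fun h => absurd h.lt (lt_irrefl N)

theorem Region.eq_around_top {v : TokenPair P} (h : Region δ w p N N v) :
    v = TokenPair.around (p N) :=
  Prod.ext h.1.eq_of_top h.2.eq_of_top

theorem region_around (hj : j ≤ N) : Region δ w p N j (TokenPair.around (p j)) :=
  ⟨.inl ⟨rfl, hj⟩, .inl ⟨rfl, hj⟩⟩

theorem Region.mark {p₀ : P} {v v' : TokenPair P} (h : Region δ w p N 0 v) (hp₀ : p 0 = p₀)
    (hv : TokenPair.mark p₀ v = some v') : Region δ w p N 0 v' := by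
  subst hp₀
  rcases TokenPair.mark_eq_some_iff.1 hv with ⟨hy, rfl⟩ | ⟨-, hx, rfl⟩
  · exact ⟨h.1, h.2.of_ne hy _⟩
  · exact ⟨h.1.of_ne hx _, h.2⟩

variable (hp : ∀ j, p (j + 1) = δ (p j) (w j))
include hp

theorem Merging.ne {q : P} (h : Merging δ w p N b q j) : q ≠ p j := by
  induction h with
  | meet _ hlt _ =>
    rintro rfl
    exact hlt.irrefl
  | step _ ih =>
    rintro rfl
    exact ih (hp _).symm

theorem Merging.not_merging {q : P} (h : Merging δ w p N b q j) : ¬ Merging δ w p N (!b) q j := by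
  intro h'
  induction h with
  | meet _ hlt hmeet =>
    cases h' with
    | meet _ hlt' _ => exact hlt.asymm (sideLT_not.1 hlt')
    | step h' => exact h'.ne hp hmeet
  | step h ih =>
    cases h' with
    | meet _ _ hmeet => exact h.ne hp hmeet
    | step h' => exact ih h'

theorem TokenRegion.eq_of_bot {x : P × Bool} (h : TokenRegion δ w p N b j x) (hx : x.1 = p j) :
    x = (p j, b) :=
  h.elim (fun h => h.1) fun h => absurd hx (h.ne hp)

theorem Region.eq_of_around {q : P} (h : Region δ w p N j (TokenPair.around q)) : q = p j := by
  rcases h with ⟨h | h, h' | h'⟩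
  · exact congrArg Prod.fst h.1
  · exact congrArg Prod.fst h.1
  · exact congrArg Prod.fst h'.1
  · exact absurd h' (h.not_merging hp)

theorem Region.eq_around_bot {v : TokenPair P} (h : Region δ w p N j v)
    (hv : TokenPair.mark (p j) v = none) : v = TokenPair.around (p j) := by
  obtain ⟨hy, hx⟩ := TokenPair.mark_eq_none_iff.1 hv
  exact Prod.ext (h.1.eq_of_bot hp hx) (h.2.eq_of_bot hp hy)

theorem TokenRegion.sibling (hj : j < N) {q q' : P} {c : Bool} (hf : δ q (w j) = δ q' (w j))
    (hlt : SideLT c q q') (hz : ∀ z, δ z (w j) = δ q (w j) → ¬ (SideLT c q z ∧ SideLT c z q'))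
    (h : TokenRegion δ w p N b j (q, c)) : TokenRegion δ w p N b j (q', !c) := by
  obtain ⟨h, -⟩ | h := h
  · cases h
    exact .inr (.meet hj hlt (by rw [hp, hf]))
  cases h with
  | meet _ hlt' hmeet =>
    rcases SideLT.trichotomy b (p j) q' with hlt'' | rfl | hlt''
    · exact .inr (.meet hj hlt'' (hf.symm.trans hmeet))
    · obtain rfl := hlt.eq_not hlt'
      exact .inl ⟨rfl, hj.le⟩
    · obtain rfl := (hlt''.trans hlt').eq_not hlt
      exact absurd ⟨sideLT_not.2 hlt', sideLT_not.2 hlt''⟩ (hz (p j) (by rw [← hp, hmeet]))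
  | step h => exact .inr (.step (by rwa [← hf]))

theorem TokenRegion.forth (hj : j < N) {q : P} {c : Bool}
    (hz : ∀ z, δ z (w j) = δ q (w j) → ¬ SideLT c q z)
    (h : TokenRegion δ w p N b j (q, c)) : TokenRegion δ w p N b (j + 1) (δ q (w j), c) := by
  obtain ⟨h, -⟩ | h := h
  · cases h
    exact .inl ⟨by rw [hp], hj⟩
  cases h with
  | meet _ hlt hmeet =>
    rcases Bool.eq_or_eq_not c b with rfl | rfl
    · exact .inl ⟨by rw [hmeet], hj⟩
    · exact absurd (sideLT_not.2 hlt) (hz (p j) (by rw [← hp, hmeet]))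
  | step h => exact .inr h

theorem TokenRegion.back (hj : j < N) {q : P} {c : Bool}
    (hz : ∀ z, δ z (w j) = δ q (w j) → ¬ SideLT c q z)
    (h : TokenRegion δ w p N b (j + 1) (δ q (w j), c)) : TokenRegion δ w p N b j (q, c) := by
  obtain ⟨h, -⟩ | h := h
  · obtain ⟨hmeet, rfl⟩ := Prod.mk.inj h
    rcases SideLT.trichotomy c (p j) q with hlt | rfl | hlt
    · exact .inr (.meet hj hlt hmeet)
    · exact .inl ⟨rfl, hj.le⟩
    · exact absurd hlt (hz (p j) (by rw [← hp, hmeet]))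
  · exact .inr (.step h)

theorem TokenRegion.contourMove (hj : j < N) {i i' : Bool × P × Bool}
    (hmove : ContourMove (δ · (w j)) i i') (h : TokenRegion δ w p N b (j + i.1.toNat) i.2) :
    TokenRegion δ w p N b (j + i'.1.toNat) i'.2 := by
  cases hmove with
  | sibling hf hlt hz => exact h.sibling hp hj hf hlt hz
  | forth hz => exact h.forth hp hj hz
  | back hz => exact h.back hp hj hz
  | leaf hz => exact h.of_ne (fun hq => hz (p j) (by rw [hq, Bool.toNat_true, hp])) _

variable [Finite P]

theorem TokenRegion.contour (hj : j < N) {d d' : Bool} {x x' : P × Bool}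
    (hx : contour (δ · (w j)) (d, x) = (d', x')) (h : TokenRegion δ w p N b (j + d.toNat) x) :
    TokenRegion δ w p N b (j + d'.toNat) x' :=
  contourMove (i' := (d', x')) hp hj (hx ▸ contourMove_contour _ (d, x)) h

theorem Region.pass (hj : j < N) {i : Bool × TokenPair P}
    (h : Region δ w p N (j + i.1.toNat) i.2) :
    Region δ w p N (j + (TokenPair.pass (δ · (w j)) i).1.toNat)
      (TokenPair.pass (δ · (w j)) i).2 := by
  obtain ⟨d, x, y⟩ := i
  obtain ⟨y', hy⟩ | ⟨y', hy⟩ := TokenPair.exists_contour_eq (δ · (w j)) d y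
  · rw [TokenPair.pass_of_snd hy]
    exact ⟨h.1, h.2.contour hp hj hy⟩
  · obtain ⟨x', hx⟩ | ⟨x', hx⟩ := TokenPair.exists_contour_eq (δ · (w j)) d x
    · rw [TokenPair.pass_of_fst hy hx]
      exact ⟨h.1.contour hp hj hx, h.2⟩
    · rw [TokenPair.pass_of_both hy hx]
      exact ⟨h.1.contour hp hj hx, h.2.contour hp hj hy⟩

end Regions

section Climber

variable {P : Type} [LinearOrder P] [Finite P]

/-- The walker computing the path of `p₀` under `δ`: two tokens go around the set of the states
whose paths meet this path, and they are next to each other again where the path goes through. -/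
noncomputable def climber (δ : P → A → P) (p₀ : P) : Walker A P (TokenPair P) where
  pass a := TokenPair.pass (δ · a)
  mark := TokenPair.mark p₀
  core := TokenPair.around
  start := p₀
  pass_pass _ := TokenPair.pass_pass _
  pass_ne _ := TokenPair.pass_ne _
  mark_symm := TokenPair.mark_symm
  mark_ne := TokenPair.mark_ne
  core_injective := TokenPair.around_injective
  mark_core_start := TokenPair.mark_eq_none_iff.2 ⟨rfl, rfl⟩

namespace Climber

open Walker

variable {δ : P → A → P} {p₀ : P} {w : ℕ → A} {p : ℕ → P}
variable (hp₀ : p 0 = p₀) (hp : ∀ j, p (j + 1) = δ (p j) (w j))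
include hp₀ hp

theorem region_next {N : ℕ} {c c' : TokenPair P × Bool × ℕ}
    (h : (climber δ p₀).next w c = some c') (hc : c.2.2 < N) (hr : Region δ w p N c.2.2 c.1) :
    Region δ w p N c'.2.2 c'.1 := by
  obtain ⟨j, i, rfl⟩ | ⟨v, rfl⟩ := eq_entering_or c
  · rw [next_entering] at h
    cases h
    exact hr.pass hp (by simp only [entering] at hc; omega)
  · obtain ⟨v', hv, rfl⟩ := Option.map_eq_some_iff.1 h
    exact hr.mark hp₀ hv

theorem rev_eq_of_region {N : ℕ} {c : TokenPair P × Bool × ℕ} (hr : Region δ w p N c.2.2 c.1)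
    (h : (climber δ p₀).next w c = none) : rev c = (climber δ p₀).orbit w 0 := by
  obtain ⟨j, i, rfl⟩ | ⟨v, rfl⟩ := eq_entering_or c
  · rw [next_entering] at h
    cases h
  · subst hp₀
    have hv : v = TokenPair.around (p 0) := hr.eq_around_bot hp (Option.map_eq_none_iff.1 h)
    rw [hv]
    rfl

theorem region_orbit {N t : ℕ}
    (hnext : ∀ s < t,
      (climber δ p₀).next w ((climber δ p₀).orbit w s) = some ((climber δ p₀).orbit w (s + 1)))
    (hlt : ∀ s < t, ((climber δ p₀).orbit w s).2.2 < N) :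
    Region δ w p N ((climber δ p₀).orbit w t).2.2 ((climber δ p₀).orbit w t).1 := by
  induction t with
  | zero => exact hp₀ ▸ region_around (Nat.zero_le N)
  | succ t ih =>
    have hr := ih (fun s hs => hnext s (by omega)) fun s hs => hlt s (by omega)
    exact region_next hp₀ hp (hnext t (by omega)) (hlt t (by omega)) hr

/-- The walk could only get stuck where it started, so by symmetry it would have to turn around. -/
theorem next_orbit (t : ℕ) :
    (climber δ p₀).next w ((climber δ p₀).orbit w t) = some ((climber δ p₀).orbit w (t + 1)) := by
  induction t using Nat.strong_induction_on with
  | _ t ih =>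
    obtain ⟨N, hN⟩ := (climber δ p₀).exists_forall_orbit_lt w t
    refine Walker.next_orbit fun h => ?_
    have hrev := rev_eq_of_region hp₀ hp (region_orbit hp₀ hp ih hN) h
    refine ne_rev_of_next (c := (climber δ p₀).orbit w) (i := 0) t (fun s hs => ih s ?_) ?_
    · omega
    · rw [Nat.zero_add, hrev]

theorem exists_orbit_eq (N : ℕ) : ∃ t,
    (climber δ p₀).orbit w t = ((climber δ p₀).core (p N), true, N) ∧
      ∀ s < t, ((climber δ p₀).orbit w s).2.2 < N := by
  classical
  have hex := exists_le_orbit (next_orbit (w := w) hp₀ hp) N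
  have hlt : ∀ s < Nat.find hex, ((climber δ p₀).orbit w s).2.2 < N :=
    fun s hs => lt_of_not_ge (Nat.find_min hex hs)
  refine ⟨Nat.find hex, ?_, hlt⟩
  have hpos : ((climber δ p₀).orbit w (Nat.find hex)).2 = (true, N) :=
    orbit_snd_eq (next_orbit hp₀ hp) (Nat.find_spec hex) hlt
  have hr := region_orbit hp₀ hp (fun s _ => next_orbit hp₀ hp s) hlt
  rw [hpos] at hr
  exact Prod.ext hr.eq_around_top hpos

theorem computes : (climber δ p₀).Computes w p := by
  choose T hT hlt using exists_orbit_eq (w := w) hp₀ hp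
  have hmono : StrictMono T := by
    intro i j hij
    by_contra! hle
    rcases hle.lt_or_eq with h | h
    · have := hlt i _ h
      rw [hT] at this
      exact hij.not_gt this
    · have := (hT j).symm.trans ((congrArg _ h).trans (hT i))
      exact hij.ne' (congrArg (fun c => c.2.2) this)
  refine computes_of_orbit (next_orbit hp₀ hp) hmono hT fun s q hq => ?_
  obtain ⟨N, hN⟩ := (climber δ p₀).exists_forall_orbit_lt w s
  have hr := region_orbit hp₀ hp (fun s _ => next_orbit hp₀ hp s) hN
  rw [hq] at hr
  exact hr.eq_of_around hp

end Climber

end Climber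

/-! ### Number of states -/

theorem add_one_pow_self_le (n : ℕ) : (n + 1) ^ n ≤ 3 * n ^ n := by
  rcases n.eq_zero_or_pos with rfl | hn
  · norm_num
  have hn₀ : (n : ℝ) ≠ 0 := Nat.cast_ne_zero.2 hn.ne'
  suffices h : ((n : ℝ) + 1) ^ n ≤ 3 * (n : ℝ) ^ n by exact_mod_cast h
  calc ((n : ℝ) + 1) ^ n = (1 + (n : ℝ)⁻¹) ^ n * (n : ℝ) ^ n := by
        rw [← mul_pow, add_mul, one_mul, inv_mul_cancel₀ hn₀]
    _ ≤ 3 * (n : ℝ) ^ n := by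
        gcongr
        exact Real.one_add_inv_pow_le_exp.trans Real.exp_one_lt_three.le

theorem add_two_pow_le (m : ℕ) : (m + 2) ^ m ≤ 3 * (m + 1) ^ m := by
  refine Nat.le_of_mul_le_mul_right ?_ m.succ_pos
  calc (m + 2) ^ m * (m + 1) ≤ (m + 2) ^ m * (m + 2) := by gcongr; omega
    _ = (m + 1 + 1) ^ (m + 1) := (pow_succ _ _).symm
    _ ≤ 3 * (m + 1) ^ (m + 1) := add_one_pow_self_le _
    _ = 3 * (m + 1) ^ m * (m + 1) := by ring

section Counting

variable (T : NoAccTrans A B)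

theorem card_fwd_add_card_bwd : Nat.card T.Fwd + Nat.card T.Bwd = Fintype.card T.Q := by
  classical
  rw [← Nat.card_sum, ← Nat.card_eq_fintype_card]
  exact Nat.card_congr (Equiv.sumCompl _)

theorem card_forestState : Nat.card (ForestState T) =
    Nat.card T.Fwd * (Fintype.card T.Q + 1) ^ (2 * Nat.card T.Bwd) := by
  rw [Nat.card_prod, Nat.card_fun, Finite.card_option, Nat.card_sum, Nat.card_prod,
    add_comm (Nat.card T.Bwd), card_fwd_add_card_bwd, Nat.card_eq_fintype_card (α := Bool),
    Fintype.card_bool, mul_comm (Nat.card T.Bwd)]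

theorem card_composite {P V : Type} [Finite V] (W : Walker A P V) {S : NoAccTrans (P × A) B}
    (hS : Reversible S.toTwoWayAut) :
    Fintype.card (W.composite hS).Q = Nat.card V * (2 * Fintype.card S.Q) := by
  rw [← Nat.card_eq_fintype_card, ← Nat.card_eq_fintype_card]
  exact (Nat.card_prod _ _).trans (by rw [Nat.card_prod, Nat.card_eq_fintype_card (α := Bool)]; rfl)

theorem card_evaluator (M : RegisterMachine A B) :
    Fintype.card M.evaluator.Q = 2 * Nat.card M.Reg + 1 := by
  have := M.finReg
  rw [← Nat.card_eq_fintype_card]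
  refine Finite.card_option.trans ?_
  rw [Nat.card_prod, Nat.card_eq_fintype_card (α := Bool), Fintype.card_bool, mul_comm]

theorem card_tokenPair (P : Type) : Nat.card (TokenPair P) = 4 * Nat.card P ^ 2 := by
  simp only [Nat.card_prod, Nat.card_eq_fintype_card (α := Bool), Fintype.card_bool]
  ring

theorem card_states_le {n f b : ℕ} (hn : f + b = n) (hf : 0 < f) :
    4 * (f * (n + 1) ^ (2 * b)) ^ 2 * (2 * (2 * (b * 2) + 1)) ≤ 2592 * n ^ (4 * n - 1) := by
  obtain ⟨m, rfl⟩ : ∃ m, n = m + 1 := ⟨n - 1, by omega⟩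
  calc 4 * (f * (m + 2) ^ (2 * b)) ^ 2 * (2 * (2 * (b * 2) + 1))
      ≤ 4 * ((m + 1) * (m + 2) ^ (2 * m)) ^ 2 * (2 * (4 * (m + 1))) := by
        gcongr <;> omega
    _ = 32 * (m + 1) ^ 3 * ((m + 2) ^ m) ^ 4 := by ring
    _ ≤ 32 * (m + 1) ^ 3 * (3 * (m + 1) ^ m) ^ 4 := by
        gcongr
        exact add_two_pow_le m
    _ = 2592 * (m + 1) ^ (4 * m + 3) := by ring
    _ = 2592 * (m + 1) ^ (4 * (m + 1) - 1) := by congr 2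

end Counting

theorem noacc_dbt_to_rt_general (T : NoAccTrans A B) (hT : Deterministic T.toTwoWayAut) :
    ∃ S : NoAccTrans A B, Reversible S.toTwoWayAut ∧
      Fintype.card S.Q ≤ 2592 * Fintype.card T.Q ^ (4 * Fintype.card T.Q - 1) ∧
      ∀ w x, S.Realizes w x ↔ T.Realizes w x := by
  let _ : LinearOrder (ForestState T) :=
    LinearOrder.lift' (Finite.equivFin (ForestState T)) (Equiv.injective _)
  let W := climber (nextForest T) (initForest T hT)
  have hS : Reversible (forestMachine T hT).evaluator.toTwoWayAut :=
    (forestMachine T hT).reversible_evaluator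
  refine ⟨W.composite hS, W.reversible_composite hS, ?_, fun w x => ?_⟩
  · have hreg : Nat.card (forestMachine T hT).Reg = Nat.card T.Bwd * 2 := by
      rw [← Fintype.card_bool, ← Nat.card_eq_fintype_card, ← Nat.card_prod]
      rfl
    have : Nonempty T.Fwd := ⟨⟨T.init, T.init_fwd⟩⟩
    rw [card_composite, card_tokenPair, card_forestState, card_evaluator, hreg]
    exact card_states_le (card_fwd_add_card_bwd T) Nat.card_pos
  · have hW : W.Computes w (forestSeq T hT w) := Climber.computes rfl fun _ => rfl
    rw [Walker.realizes_composite_iff hS rfl hW]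
    exact realizes_evaluator_forestMachine_iff hT w x

/-- Every deterministic two-way transducer `T` with `n` states and no
acceptance condition is equivalent to a reversible two-way transducer `S` with no acceptance
condition and at most `C·n^(4n+1)` states, for some absolute constant `C`. -/
theorem noacc_dbt_to_rt :
    ∃ C : ℕ, ∀ (A B : Type) [Fintype A] [Fintype B] (T : NoAccTrans A B) (n : ℕ),
      Deterministic T.toTwoWayAut → Fintype.card T.Q = n →
      ∃ S : NoAccTrans A B,
        Reversible S.toTwoWayAut ∧
        Fintype.card S.Q ≤ C * n ^ (4 * n + 1) ∧
        (∀ w x, S.Realizes w x ↔ T.Realizes w x) := by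
  refine ⟨2592, fun A B _ _ T n hT hn => hn ▸ ?_⟩
  obtain ⟨S, hS, hcard, hST⟩ := noacc_dbt_to_rt_general T hT
  have hpos : 0 < Fintype.card T.Q := Fintype.card_pos_iff.2 ⟨T.init⟩
  exact ⟨S, hS, hcard.trans (Nat.mul_le_mul_left 2592 (Nat.pow_le_pow_right hpos (by omega))), hST⟩

end Paper
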